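/- Let X be a complemented subspace of X_p, let P be a bounded projection on X with range Y, and let ε, α, α' be positive constants with ε ≤ ‖I − P‖^{-1} such that (a) r(y) ≤ α' for all nonzero y ∈ Y, and (b) for every x ∈ X with r(x) < α there exists y ∈ Y with ‖x − y‖ < ε·‖x‖. Then X is isomorphic to a complemented subspace of ℓ_p ⊕ ℓ_2. -/

import Mathlib

open scoped ENNReal

noncomputable section

/-- The sequence space `ℓ_p` (of real sequences), for a real exponent `p`. -/
abbrev SeqP (p : ℝ) := lp (fun _ : ℕ => ℝ) (ENNReal.ofReal p)

/-- The sequence space `ℓ_2` (of real sequences). -/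
abbrev Seq2 := lp (fun _ : ℕ => ℝ) 2

/-- The space `X_{p,w}`, realized as the submodule of `ℓ_p ⊕_∞ ℓ_2` consisting of the
pairs `(x, y)` with `y n = w n * x n`.  Since the norm on the product is the maximum of
the two norms, this is exactly the completion of the finitely supported sequences under
`‖a‖ = max {|a|_p, |a|_{2,w}}`, the element with coordinates `a` being identified with
the pair `(a, w·a)`. -/
def XpwMod (p : ℝ) (w : ℕ → ℝ) : Submodule ℝ (SeqP p × Seq2) where
  carrier := {z | ∀ n, (z.2 : ℕ → ℝ) n = w n * (z.1 : ℕ → ℝ) n}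
  add_mem' := by
    intro a b ha hb n
    simp only [Prod.fst_add, Prod.snd_add, lp.coeFn_add, Pi.add_apply, ha n, hb n]
    ring
  zero_mem' := by
    intro n
    simp
  smul_mem' := by
    intro c a ha n
    simp only [Prod.smul_fst, Prod.smul_snd, lp.coeFn_smul, Pi.smul_apply, ha n,
      smul_eq_mul]
    ring

/-- The space `X_{p,w}` with its natural norm `‖a‖ = max {|a|_p, |a|_{2,w}}`. -/
def Xpw (p : ℝ) (w : ℕ → ℝ) : Type := ↥(XpwMod p w)

variable {p : ℝ} {w : ℕ → ℝ}

instance [Fact (1 ≤ ENNReal.ofReal p)] : NormedAddCommGroup (Xpw p w) :=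
  inferInstanceAs (NormedAddCommGroup ↥(XpwMod p w))

instance [Fact (1 ≤ ENNReal.ofReal p)] : NormedSpace ℝ (Xpw p w) :=
  inferInstanceAs (NormedSpace ℝ ↥(XpwMod p w))

/-- The pair of coordinates (in `ℓ_p` and in weighted `ℓ_2`) of an element of `X_{p,w}`. -/
def Xpw.pair (x : Xpw p w) : SeqP p × Seq2 := (show ↥(XpwMod p w) from x).val

/-- The underlying sequence of coordinates of an element of `X_{p,w}`. -/
def seq (x : Xpw p w) : ℕ → ℝ := (Xpw.pair x).1

/-- `|x|_p` for `x ∈ X_{p,w}`. -/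
def nrmP (x : Xpw p w) : ℝ := ‖(Xpw.pair x).1‖

/-- `|x|_2 = |x|_{2,w}` for `x ∈ X_{p,w}`. -/
def nrm2 (x : Xpw p w) : ℝ := ‖(Xpw.pair x).2‖

/-- The ratio `r(x) = |x|_2 / |x|_p`. -/
def ratio (x : Xpw p w) : ℝ := nrm2 x / nrmP x

/-- `ω(E) = ∑_{n ∈ E} w_n^{2p/(p-2)}`. -/
def omegaE (p : ℝ) (w : ℕ → ℝ) (E : Set ℕ) : ℝ :=
  ∑' n : E, w (n : ℕ) ^ (2 * p / (p - 2))

/-- The pairing `⟨x, y⟩ = ∑_n x_n y_n w_n²`. -/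
def pairW (w : ℕ → ℝ) (x y : Xpw p w) : ℝ :=
  ∑' n, seq x n * seq y n * w n ^ 2

/-- `w` is a weight sequence suitable for Rosenthal's space `X_p`: it is positive and for
every `ε > 0`, `∑_{w_n < ε} w_n^{2p/(p-2)} = ∞`. -/
def IsXpWeight (p : ℝ) (w : ℕ → ℝ) : Prop :=
  (∀ n, 0 < w n) ∧
    ∀ ε : ℝ, 0 < ε →
      (∑' n : {n : ℕ | w n < ε}, ENNReal.ofReal (w (n : ℕ) ^ (2 * p / (p - 2)))) = ⊤

theorem memℓp_indicator {q : ℝ≥0∞} (E : Set ℕ) {f : ℕ → ℝ} (hf : Memℓp f q) :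
    Memℓp (E.indicator f) q := by
  rcases ENNReal.trichotomy q with hq | hq | hq
  · subst hq
    refine memℓp_zero ((memℓp_zero_iff.mp hf).subset ?_)
    intro i hi
    simp only [Set.mem_setOf_eq] at hi ⊢
    intro h
    exact hi (by simp [Set.indicator_apply, h])
  · subst hq
    obtain ⟨C, hC⟩ := (memℓp_infty_iff.mp hf)
    refine memℓp_infty ⟨C, ?_⟩
    rintro x ⟨i, rfl⟩
    exact le_trans (norm_indicator_le_norm_self f i) (hC ⟨i, rfl⟩)
  · refine memℓp_gen (Summable.of_nonneg_of_le (fun i => ?_) (fun i => ?_)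
      (hf.summable hq))
    · positivity
    · exact Real.rpow_le_rpow (norm_nonneg _) (norm_indicator_le_norm_self f i) hq.le

/-- The restriction `x ↦ x_{|E}` of elements of `X_{p,w}` to a set `E` of coordinates. -/
def restrict (E : Set ℕ) (x : Xpw p w) : Xpw p w :=
  show ↥(XpwMod p w) from
  ⟨(⟨E.indicator ((Xpw.pair x).1 : ℕ → ℝ), memℓp_indicator E (lp.memℓp (Xpw.pair x).1)⟩,
    ⟨E.indicator ((Xpw.pair x).2 : ℕ → ℝ), memℓp_indicator E (lp.memℓp (Xpw.pair x).2)⟩), by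
    intro n
    by_cases hn : n ∈ E
    · have h : ((Xpw.pair x).2 : ℕ → ℝ) n = w n * ((Xpw.pair x).1 : ℕ → ℝ) n :=
        (show ↥(XpwMod p w) from x).2 n
      simpa [Set.indicator_of_mem hn] using h
    · simp [Set.indicator_of_notMem hn]⟩

/-! The two halves of `X` given by `P` embed into `ℓ_p` and `ℓ_2` separately.

On `Y` the norm `|·|_2` is dominated by `|·|_p`, so `x ↦ |P x|_2` is dominated by `|P x|_p`, and the
argument of Pitt's theorem makes `x ↦ w · P x` a compact operator into `ℓ_2`. Its coordinates can
therefore be grouped into finite blocks, the `k`-th of which carries a part of norm `O(4⁻ᵏ)`, and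
multiplying the weights by `2ᵏ` on the `k`-th block leaves `P` bounded. By Rosenthal's inequality,
independent three-valued random variables embed the finite-dimensional `X_{p,v}` complementably into
finite-dimensional `ℓ_p`, with constants depending on `p` only; for the enlarged weights the block
projections can be summed, since the `ℓ_2` parts now gain `2⁻ᵏ`. So `P` factors through `ℓ_p`.

On `ker P` condition (b) forces `r ≥ α`, so `|·|_2` is an equivalent norm there and `ker P` is a
closed, hence complemented, subspace of `ℓ_2`. Together, the identity of `X` factors through
`ℓ_p ⊕ ℓ_2`. -/

open Filter Topology Finset MeasureTheory ProbabilityTheory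

section Pitt

variable {ι : Type*} {q : ℝ≥0∞}

/-- The filter on `E` along which every coordinate of `J x ∈ ℓ_q` tends to zero. -/
def coordNull {E : Type*} (J : E → lp (fun _ : ι ↦ ℝ) q) : Filter E :=
  comap (fun x i ↦ J x i) (𝓝 0)

theorem tendsto_coordNull_iff {E α : Type*} {J : E → lp (fun _ : ι ↦ ℝ) q} {l : Filter α}
    {f : α → E} :
    Tendsto f l (coordNull J) ↔ ∀ i, Tendsto (fun a ↦ J (f a) i) l (𝓝 0) :=
  tendsto_comap_iff.trans tendsto_pi_nhds

theorem tendsto_apply_coordNull {E : Type*} (J : E → lp (fun _ : ι ↦ ℝ) q) (i : ι) :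
    Tendsto (fun x ↦ J x i) (coordNull J) (𝓝 0) :=
  tendsto_coordNull_iff.1 tendsto_id i

theorem norm_sum_single_add_rpow_le [DecidableEq ι] (hq : 0 < q.toReal)
    (y z : lp (fun _ : ι ↦ ℝ) q) (s : Finset ι) :
    ‖∑ i ∈ s, lp.single q i (y i) + (z - ∑ i ∈ s, lp.single q i (z i))‖ ^ q.toReal ≤
      ‖y‖ ^ q.toReal + ‖z‖ ^ q.toReal := by
  set f := ∑ i ∈ s, lp.single q i (y i) + (z - ∑ i ∈ s, lp.single q i (z i))
  have hfy : ∀ i ∈ s, f i = y i := fun i hi ↦ by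
    simp only [f, lp.coeFn_add, lp.coeFn_sub, lp.coeFn_sum, lp.coeFn_single, Pi.add_apply,
      Pi.sub_apply, Finset.sum_apply, Finset.sum_pi_single, if_pos hi, sub_self, add_zero]
  have hf := lp.norm_compl_sum_single hq f s
  rw [sum_congr rfl fun i hi ↦ congrArg (lp.single q i) (hfy i hi),
    sum_congr rfl fun i hi ↦ congrArg (‖·‖ ^ q.toReal) (hfy i hi), add_sub_cancel_left] at hf
  have hz := lp.norm_compl_sum_single hq z s
  have hy := lp.sum_rpow_le_norm_rpow hq y s
  have : 0 ≤ ∑ i ∈ s, ‖z i‖ ^ q.toReal := by positivity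
  linarith

variable [Fact (1 ≤ q)]

theorem eventually_norm_add_le_of_coordNull (hq : q ≠ ∞) (y : lp (fun _ : ι ↦ ℝ) q)
    {δ : ℝ} (hδ : 0 < δ) :
    ∀ᶠ z in coordNull (id : lp (fun _ : ι ↦ ℝ) q → _),
      ‖y + z‖ ≤ (‖y‖ ^ q.toReal + ‖z‖ ^ q.toReal) ^ (1 / q.toReal) + δ := by
  classical
  have hr : 0 < q.toReal := ENNReal.toReal_pos (zero_lt_one.trans_le Fact.out).ne' hq
  let head (s : Finset ι) (u : ι → ℝ) : lp (fun _ : ι ↦ ℝ) q := ∑ i ∈ s, lp.single q i (u i)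
  obtain ⟨s, hs⟩ : ∃ s, ‖head s y - y‖ < δ / 2 :=
    ((lp.hasSum_single hq y).eventually (Metric.ball_mem_nhds y (half_pos hδ))).exists.imp
      fun s h ↦ by simpa [dist_eq_norm] using h
  have head_small : ∀ᶠ u : ι → ℝ in 𝓝 0, ‖head s u‖ < δ / 2 := by
    have hcont : Continuous fun u : ι → ℝ ↦ ‖head s u‖ :=
      (continuous_finsetSum s fun i _ ↦
        (lp.singleContinuousLinearMap ℝ (fun _ ↦ ℝ) q i).continuous.comp
          (continuous_apply i)).norm
    have h0 : ‖head s (0 : ι → ℝ)‖ < δ / 2 := by simpa [head] using half_pos hδ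
    exact hcont.continuousAt.eventually_lt continuousAt_const h0
  filter_upwards [preimage_mem_comap head_small] with z hz
  set f := head s y + (z - head s z)
  have norm_f : ‖f‖ ^ q.toReal ≤ ‖y‖ ^ q.toReal + ‖z‖ ^ q.toReal :=
    norm_sum_single_add_rpow_le hr y z s
  calc ‖y + z‖ = ‖f - (head s y - y) + head s z‖ := by congr 1; simp only [f]; abel
    _ ≤ ‖f‖ + ‖head s y - y‖ + ‖head s z‖ :=
        (norm_add_le _ _).trans (by gcongr; exact norm_sub_le _ _)
    _ ≤ (‖y‖ ^ q.toReal + ‖z‖ ^ q.toReal) ^ (1 / q.toReal) + δ := by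
        have : ‖f‖ ≤ (‖y‖ ^ q.toReal + ‖z‖ ^ q.toReal) ^ (1 / q.toReal) := by
          rw [one_div]
          exact (Real.le_rpow_inv_iff_of_pos (norm_nonneg _) (by positivity) hr).2 norm_f
        have : ‖head s z‖ < δ / 2 := hz
        linarith

variable {E H : Type*} [NormedAddCommGroup E] [NormedSpace ℝ E]
  [NormedAddCommGroup H] [InnerProductSpace ℝ H]
  (J : E →L[ℝ] lp (fun _ : ι ↦ ℝ) q) (S : E →L[ℝ] H)

theorem tendsto_smul_coordNull (t : ℝ) :
    Tendsto (fun x ↦ t • x) (coordNull J) (coordNull J) := by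
  refine tendsto_coordNull_iff.2 fun i ↦ ?_
  simpa using (tendsto_apply_coordNull J i).const_mul t

theorem tendsto_add_coordNull :
    Tendsto (fun v : E × E ↦ v.1 + v.2) (coordNull J ×ˢ coordNull J) (coordNull J) := by
  refine tendsto_coordNull_iff.2 fun i ↦ ?_
  simpa using ((tendsto_apply_coordNull J i).comp tendsto_fst).add
    ((tendsto_apply_coordNull J i).comp tendsto_snd)

theorem tendsto_sub_coordNull :
    Tendsto (fun v : E × E ↦ v.1 - v.2) (coordNull J ×ˢ coordNull J) (coordNull J) := by
  refine tendsto_coordNull_iff.2 fun i ↦ ?_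
  simpa using ((tendsto_apply_coordNull J i).comp tendsto_fst).sub
    ((tendsto_apply_coordNull J i).comp tendsto_snd)

theorem eventually_norm_le_mul_of_coordNull {c R : ℝ} (hR : 0 < R)
    (hS : ∀ᶠ x in coordNull J, ‖J x‖ ≤ 1 → ‖S x‖ ≤ c) :
    ∀ᶠ x in coordNull J, ‖J x‖ ≤ R → ‖S x‖ ≤ R * c := by
  filter_upwards [(tendsto_smul_coordNull J R⁻¹).eventually hS] with x hx hJx
  simpa [norm_smul, abs_of_pos hR, inv_mul_le_iff₀ hR, hJx] using hx

/- The parallelogram law gains the factor `√2` for the sum of two almost disjoint vectors,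
whereas their `ℓ_q` norm only grows by `2 ^ (1 / q)`. -/
theorem norm_le_of_two_rpow_lt (hq : q ≠ ∞) {c θ : ℝ} (hc : 0 ≤ c)
    (hθ : (2 : ℝ) ^ (1 / q.toReal) < √2 * θ)
    (hS : ∀ᶠ x in coordNull J, ‖J x‖ ≤ 1 → ‖S x‖ ≤ c) :
    ∀ᶠ x in coordNull J, ‖J x‖ ≤ 1 → ‖S x‖ ≤ θ * c := by
  set G := coordNull J
  have hθ0 : 0 < √2 * θ := (by positivity : (0 : ℝ) < 2 ^ (1 / q.toReal)).trans hθ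
  have hscaled := eventually_norm_le_mul_of_coordNull J S hθ0 hS
  by_contra hlarge
  obtain ⟨y, hy, hpm⟩ := ((not_eventually.1 hlarge).and_eventually
    (((tendsto_add_coordNull J).eventually hscaled).and
      ((tendsto_sub_coordNull J).eventually hscaled)).curry).exists
  have hδ := sub_pos.2 hθ
  have htendsto : Tendsto J G (coordNull id) :=
    tendsto_coordNull_iff.2 (tendsto_apply_coordNull J)
  obtain ⟨z, hz, ⟨hplus, hminus⟩, hJplus, hJminus⟩ := ((not_eventually.1 hlarge).and_eventually
    (hpm.and ((htendsto.eventually (eventually_norm_add_le_of_coordNull hq (J y) hδ)).and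
      (htendsto.eventually
        (eventually_norm_add_le_of_coordNull hq (-J y) hδ))))).exists
  push Not at hy hz
  have hpow : (‖J y‖ ^ q.toReal + ‖J z‖ ^ q.toReal) ^ (1 / q.toReal) ≤ 2 ^ (1 / q.toReal) := by
    have h1 := Real.rpow_le_one (norm_nonneg _) hy.1 (z := q.toReal) ENNReal.toReal_nonneg
    have h2 := Real.rpow_le_one (norm_nonneg _) hz.1 (z := q.toReal) ENNReal.toReal_nonneg
    gcongr
    linarith
  have hSplus : ‖S y + S z‖ ≤ √2 * θ * c := by
    simpa using hplus (by rw [map_add]; linarith)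
  have hSminus : ‖S y - S z‖ ≤ √2 * θ * c := by
    rw [norm_neg, neg_add_eq_sub, norm_sub_rev] at hJminus
    simpa using hminus (by rw [map_sub]; linarith)
  have hθ' : 0 < θ := pos_of_mul_pos_right hθ0 (by positivity)
  have hcontra : 4 * (θ * c) ^ 2 < 4 * (θ * c) ^ 2 :=
    calc 4 * (θ * c) ^ 2 = 2 * ((θ * c) ^ 2 + (θ * c) ^ 2) := by ring
      _ < 2 * (‖S y‖ ^ 2 + ‖S z‖ ^ 2) := by gcongr <;> tauto
      _ = ‖S y + S z‖ ^ 2 + ‖S y - S z‖ ^ 2 := by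
          linarith [parallelogram_law_with_norm ℝ (S y) (S z)]
      _ ≤ (√2 * θ * c) ^ 2 + (√2 * θ * c) ^ 2 := by gcongr
      _ = 4 * (θ * c) ^ 2 := by rw [mul_assoc, mul_pow, Real.sq_sqrt (by norm_num)]; ring
  exact hcontra.false

theorem eventually_norm_le_of_norm_le (hq : q ≠ ∞) (hq2 : 2 < q.toReal) {c : ℝ}
    (hS : ∀ x, ‖S x‖ ≤ c * ‖J x‖) {R ε : ℝ} (hR : 0 < R) (hε : 0 < ε) :
    ∀ᶠ x in coordNull J, ‖J x‖ ≤ R → ‖S x‖ ≤ ε := by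
  have hroot : (2 : ℝ) ^ (1 / q.toReal) < √2 := by
    rw [Real.sqrt_eq_rpow]
    exact Real.rpow_lt_rpow_of_exponent_lt one_lt_two (one_div_lt_one_div_of_lt two_pos hq2)
  obtain ⟨θ, hθ, hθ1⟩ := exists_between ((div_lt_one (by positivity)).2 hroot)
  have hθ0 : 0 < θ := (by positivity : (0 : ℝ) < 2 ^ (1 / q.toReal) / √2).trans hθ
  have hiter (k : ℕ) :
      ∀ᶠ x in coordNull J, ‖J x‖ ≤ 1 → ‖S x‖ ≤ θ ^ k * |c| := by
    induction k with
    | zero =>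
      refine .of_forall fun x hx ↦ (hS x).trans ?_
      calc c * ‖J x‖ ≤ |c| * 1 := by gcongr; exact le_abs_self c
        _ = θ ^ 0 * |c| := by ring
    | succ k ih =>
      rw [pow_succ', mul_assoc]
      exact norm_le_of_two_rpow_lt J S hq (by positivity) ((div_lt_iff₀' (by positivity)).1 hθ) ih
  have hlim : Tendsto (fun k : ℕ ↦ R * (θ ^ k * |c|)) atTop (𝓝 0) := by
    simpa using ((tendsto_pow_atTop_nhds_zero_of_lt_one hθ0.le hθ1).mul_const |c|).const_mul R
  obtain ⟨k, hk⟩ := (hlim.eventually_lt_const hε).exists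
  filter_upwards [eventually_norm_le_mul_of_coordNull J S hR (hiter k)] with x hx hJx
  exact (hx hJx).trans hk.le

theorem isCompactOperator_of_norm_le [CompleteSpace H] (hq : q ≠ ∞) (hq2 : 2 < q.toReal) {c : ℝ}
    (hS : ∀ x, ‖S x‖ ≤ c * ‖J x‖) : IsCompactOperator S := by
  set B : Set E := Metric.ball 0 1
  suffices htb : TotallyBounded (S '' B) from
    (isCompactOperator_iff_isCompact_closure_image_ball (S : E →ₗ[ℝ] H) zero_lt_one).2
      (htb.closure.isCompact_of_isClosed isClosed_closure)
  refine totallyBounded_iff_ultrafilter.2 fun f hf ↦ ?_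
  have hfB : S '' B ∈ f := le_principal_iff.1 hf
  set g : Ultrafilter E := .ofComapInfPrincipal hfB
  have hBg : B ∈ (g : Filter E) := Ultrafilter.ofComapInfPrincipal_mem hfB
  have hgf : Filter.map S g = (f : Filter H) :=
    congrArg Ultrafilter.toFilter (Ultrafilter.ofComapInfPrincipal_eq_of_map hfB)
  have hJB {x : E} (hx : x ∈ B) : ‖J x‖ ≤ ‖J‖ :=
    J.unit_le_opNorm x (mem_ball_zero_iff.1 hx).le
  obtain ⟨u, -, hu⟩ : ∃ u ∈ Set.pi Set.univ fun _ : ι ↦ Set.Icc (-‖J‖) ‖J‖,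
      (g.map fun x i ↦ J x i : Filter (ι → ℝ)) ≤ 𝓝 u := by
    refine (isCompact_univ_pi fun _ ↦ isCompact_Icc).ultrafilter_le_nhds _ (le_principal_iff.2 ?_)
    refine mem_map.2 (mem_of_superset hBg fun x hx i _ ↦ ?_)
    exact abs_le.1 ((lp.norm_apply_le_norm (zero_lt_one.trans_le Fact.out).ne' (J x) i).trans
      (hJB hx))
  have hdiff : Tendsto (fun v : E × E ↦ v.1 - v.2) (g ×ˢ g) (coordNull J) := by
    refine tendsto_coordNull_iff.2 fun i ↦ ?_
    have hui : Tendsto (fun x ↦ J x i) g (𝓝 (u i)) := tendsto_pi_nhds.1 hu i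
    simpa using (hui.comp tendsto_fst).sub (hui.comp tendsto_snd)
  rw [← hgf, cauchy_map_iff', Metric.uniformity_basis_dist_le.tendsto_right_iff]
  intro ε hε
  filter_upwards [hdiff.eventually (eventually_norm_le_of_norm_le J S hq hq2 hS
    (R := ‖J‖ + ‖J‖ + 1) (by positivity) hε), prod_mem_prod hBg hBg] with v hv hvB
  rw [dist_eq_norm, ← map_sub]
  refine hv ?_
  rw [map_sub]
  linarith [norm_sub_le (J v.1) (J v.2), hJB hvB.1, hJB hvB.2]

end Pitt

section Tails

variable {ι : Type*} {q : ℝ≥0∞} [Fact (1 ≤ q)]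

theorem exists_finset_norm_sub_sum_single_le_of_totallyBounded (hq : q ≠ ∞)
    {K : Set (lp (fun _ : ι ↦ ℝ) q)} (hK : TotallyBounded K) {η : ℝ} (hη : 0 < η)
    [DecidableEq ι] : ∃ s : Finset ι, ∀ y ∈ K, ‖y - ∑ i ∈ s, lp.single q i (y i)‖ ≤ η := by
  have hr : 0 < q.toReal := ENNReal.toReal_pos (zero_lt_one.trans_le Fact.out).ne' hq
  obtain ⟨N, hN, hKN⟩ := Metric.totallyBounded_iff.1 hK (η / 2) (half_pos hη)
  have hnet : ∀ᶠ s : Finset ι in atTop, ∀ y ∈ N, ‖y - ∑ i ∈ s, lp.single q i (y i)‖ < η / 2 :=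
    (eventually_all_finite hN).2 fun y _ ↦ by
      have := (lp.hasSum_single hq y).eventually (Metric.ball_mem_nhds y (half_pos hη))
      simpa only [dist_eq_norm', SummationFilter.unconditional_filter, Metric.mem_ball] using this
  obtain ⟨s, hs⟩ := hnet.exists
  refine ⟨s, fun y hy ↦ ?_⟩
  obtain ⟨z, hz, hyz⟩ := Set.mem_iUnion₂.1 (hKN hy)
  set d := y - z
  have htail : ‖d - ∑ i ∈ s, lp.single q i (d i)‖ ≤ ‖d‖ := by
    rw [← Real.rpow_le_rpow_iff (norm_nonneg _) (norm_nonneg _) hr, lp.norm_compl_sum_single hr]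
    exact sub_le_self _ (by positivity)
  calc ‖y - ∑ i ∈ s, lp.single q i (y i)‖
      = ‖(d - ∑ i ∈ s, lp.single q i (d i)) + (z - ∑ i ∈ s, lp.single q i (z i))‖ := by
        simp only [d, lp.coeFn_sub, Pi.sub_apply, lp.single_sub, sum_sub_distrib]
        congr 1
        abel
    _ ≤ η / 2 + η / 2 := by
        refine (norm_add_le _ _).trans (add_le_add (htail.trans ?_) (hs z hz).le)
        exact (mem_ball_iff_norm.1 hyz).le
    _ = η := add_halves η

variable {E : Type*} [NormedAddCommGroup E] [NormedSpace ℝ E]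

theorem exists_finset_sum_rpow_le_of_isCompactOperator (hq : q ≠ ∞)
    {S : E →L[ℝ] lp (fun _ : ι ↦ ℝ) q} (hS : IsCompactOperator S) {η : ℝ} (hη : 0 < η) :
    ∃ s : Finset ι, ∀ x t, Disjoint s t →
      ∑ i ∈ t, ‖S x i‖ ^ q.toReal ≤ (η * ‖x‖) ^ q.toReal := by
  classical
  have hr : 0 < q.toReal := ENNReal.toReal_pos (zero_lt_one.trans_le Fact.out).ne' hq
  have hcpt := (isCompactOperator_iff_isCompact_closure_image_closedBall
    (S : E →ₗ[ℝ] lp (fun _ : ι ↦ ℝ) q) zero_lt_one).1 hS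
  obtain ⟨s, hs⟩ := exists_finset_norm_sub_sum_single_le_of_totallyBounded hq
    (hcpt.totallyBounded.subset subset_closure) hη
  refine ⟨s, fun x t hst ↦ ?_⟩
  have hx : ‖S x - ∑ i ∈ s, lp.single q i (S x i)‖ ≤ η * ‖x‖ := by
    let T : E →L[ℝ] lp (fun _ : ι ↦ ℝ) q := S - ∑ i ∈ s,
      (lp.singleContinuousLinearMap ℝ (fun _ ↦ ℝ) q i) ∘L (lp.evalCLM ℝ (fun _ ↦ ℝ) q i) ∘L S
    have hT (x : E) : T x = S x - ∑ i ∈ s, lp.single q i (S x i) := by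
      simp [T, lp.evalCLM]
    rw [← hT]
    refine T.le_of_opNorm_le (T.opNorm_le_of_unit_norm hη.le fun x hx ↦ ?_) x
    rw [hT]
    exact hs _ ⟨x, by simpa using hx.le, rfl⟩
  calc ∑ i ∈ t, ‖S x i‖ ^ q.toReal
      = ∑ i ∈ t, ‖(S x - ∑ i ∈ s, lp.single q i (S x i)) i‖ ^ q.toReal := by
        refine sum_congr rfl fun i hi ↦ ?_
        have his : i ∉ s := fun h ↦ disjoint_left.1 hst h hi
        simp only [lp.coeFn_sub, Pi.sub_apply, lp.coeFn_sum, lp.coeFn_single, Finset.sum_apply,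
          Finset.sum_pi_single, if_neg his, sub_zero]
    _ ≤ ‖S x - ∑ i ∈ s, lp.single q i (S x i)‖ ^ q.toReal := lp.sum_rpow_le_norm_rpow hr _ t
    _ ≤ (η * ‖x‖) ^ q.toReal := by gcongr

theorem exists_blocks_of_isCompactOperator (hq : q ≠ ∞) {S : E →L[ℝ] lp (fun _ : ℕ ↦ ℝ) q}
    (hS : IsCompactOperator S) {η : ℕ → ℝ} (hη : ∀ k, 0 < η k) (hη0 : ‖S‖ ≤ η 0) :
    ∃ κ : ℕ → ℕ, (∀ k, (κ ⁻¹' {k}).Finite) ∧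
      ∀ k x t, (∀ i ∈ t, κ i = k) → ∑ i ∈ t, ‖S x i‖ ^ q.toReal ≤ (η k * ‖x‖) ^ q.toReal := by
  classical
  have hr : 0 < q.toReal := ENNReal.toReal_pos (zero_lt_one.trans_le Fact.out).ne' hq
  choose s hs using fun k ↦ exists_finset_sum_rpow_le_of_isCompactOperator hq hS (hη k)
  let good (i k : ℕ) : Prop := k = 0 ∨ i ∉ s k
  refine ⟨fun i ↦ Nat.findGreatest (good i) i, fun k ↦ ?_, fun k x t ht ↦ ?_⟩
  · refine ((s (k + 1)).finite_toSet.union (Set.finite_Iic k)).subset fun i hi ↦ ?_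
    rcases le_or_gt i k with hik | hik
    · exact .inr hik
    · have := Nat.findGreatest_is_greatest (P := good i) (hi.symm ▸ k.lt_succ_self) hik
      exact .inl (by simpa [good] using this)
  · rcases eq_or_ne k 0 with rfl | hk
    · refine (lp.sum_rpow_le_norm_rpow hr (S x) t).trans ?_
      gcongr
      exact S.le_of_opNorm_le hη0 x
    · refine hs k x t (disjoint_right.2 fun i hi ↦ ?_)
      have hgood : good i k :=
        ht i hi ▸ Nat.findGreatest_spec (P := good i) (Nat.zero_le i) (.inl rfl)
      exact hgood.resolve_left hk

end Tails

section SignedPow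

/-- The duality map `s ↦ s |s| ^ (r - 2)` of the exponent `r`, that is `1 / r` times the derivative
of `|s| ^ r`. -/
def signedPow (r s : ℝ) : ℝ := s * |s| ^ (r - 2)

theorem signedPow_neg (r s : ℝ) : signedPow r (-s) = -signedPow r s := by
  simp [signedPow]

theorem abs_signedPow {r : ℝ} (hr : r ≠ 1) (s : ℝ) : |signedPow r s| = |s| ^ (r - 1) := by
  rcases eq_or_ne s 0 with rfl | -
  · simp [signedPow, Real.zero_rpow (sub_ne_zero.2 hr)]
  · rw [signedPow, abs_mul, Real.abs_rpow_of_nonneg (abs_nonneg s), abs_abs,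
      ← Real.rpow_one_add' (abs_nonneg s) (by contrapose! hr; linarith)]
    ring_nf

theorem mul_signedPow {r : ℝ} (hr : r ≠ 0) (s : ℝ) : s * signedPow r s = |s| ^ r := by
  rcases eq_or_ne s 0 with rfl | hs
  · simp [signedPow, Real.zero_rpow hr]
  · rw [signedPow, ← mul_assoc, ← abs_mul_abs_self, ← pow_two, ← Real.rpow_natCast,
      ← Real.rpow_add (abs_pos.2 hs)]
    norm_num

theorem signedPow_of_nonneg {r s : ℝ} (hr : r ≠ 1) (hs : 0 ≤ s) : signedPow r s = s ^ (r - 1) := by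
  have : 0 ≤ signedPow r s := mul_nonneg hs (by positivity)
  rw [← abs_of_nonneg this, abs_signedPow hr, abs_of_nonneg hs]

@[fun_prop]
theorem measurable_signedPow (r : ℝ) : Measurable (signedPow r) := by
  unfold signedPow
  fun_prop

theorem rpow_sub_rpow_le {s a b : ℝ} (hs : 1 ≤ s) (hb : 0 ≤ b) (hba : b ≤ a) :
    a ^ s - b ^ s ≤ s * ((a - b) * a ^ (s - 1)) := by
  rcases (hb.trans hba).eq_or_lt with rfl | ha
  · simp [le_antisymm hba hb]
  have bernoulli : 1 + s * (b / a - 1) ≤ (b / a) ^ s := by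
    have : 0 ≤ b / a := div_nonneg hb ha.le
    simpa using one_add_mul_self_le_rpow_one_add (s := b / a - 1) (by linarith) hs
  have := mul_le_mul_of_nonneg_right bernoulli (Real.rpow_nonneg ha.le s)
  rw [Real.div_rpow hb ha.le, div_mul_cancel₀ _ (by positivity)] at this
  calc a ^ s - b ^ s ≤ -(s * (b / a - 1)) * a ^ s := by linarith
    _ = s * ((a - b) * a ^ (s - 1)) := by rw [Real.rpow_sub_one ha.ne']; field_simp; ring

theorem symmetric_induction_abs_le {Q : ℝ → ℝ → Prop} (swap : ∀ a b, Q a b → Q b a)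
    (neg : ∀ a b, Q a b → Q (-a) (-b)) (of_abs_le : ∀ a b, |b| ≤ a → Q a b) (a b : ℝ) : Q a b := by
  wlog hab : |b| ≤ |a| generalizing a b
  · exact swap _ _ (this b a (le_of_not_ge hab))
  rcases abs_choice a with ha | ha
  · exact of_abs_le a b (ha ▸ hab)
  · simpa using neg _ _ (of_abs_le (-a) (-b) (by rwa [abs_neg, ← ha]))

theorem abs_signedPow_sub_le_of_le_two {r : ℝ} (hr1 : 1 < r) (hr2 : r ≤ 2) (a b : ℝ) :
    |signedPow r a - signedPow r b| ≤ 2 * |a - b| ^ (r - 1) := by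
  have hr : 0 ≤ r - 1 := by linarith
  induction a, b using symmetric_induction_abs_le with
  | swap a b h => rwa [abs_sub_comm, abs_sub_comm b]
  | neg a b h =>
    rwa [signedPow_neg, signedPow_neg, neg_sub_neg, neg_sub_neg, abs_sub_comm, abs_sub_comm b]
  | of_abs_le a b hba => ?_
  have ha : 0 ≤ a := (abs_nonneg b).trans hba
  rw [signedPow_of_nonneg hr1.ne' ha, abs_of_nonneg (sub_nonneg.2 ((le_abs_self b).trans hba))]
  rcases le_or_gt 0 b with hb | hb
  · rw [abs_of_nonneg hb] at hba
    rw [signedPow_of_nonneg hr1.ne' hb, abs_of_nonneg (sub_nonneg.2 (by gcongr))]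
    have hsub := Real.rpow_add_le_add_rpow hb (sub_nonneg.2 hba) hr (by linarith)
    rw [add_sub_cancel] at hsub
    have := Real.rpow_nonneg (sub_nonneg.2 hba) (r - 1)
    linarith
  · calc |a ^ (r - 1) - signedPow r b| ≤ a ^ (r - 1) + |b| ^ (r - 1) := by
          rw [← abs_signedPow hr1.ne' b]
          simpa only [abs_of_nonneg (Real.rpow_nonneg ha (r - 1))] using
            abs_sub (a ^ (r - 1)) (signedPow r b)
      _ ≤ (a - b) ^ (r - 1) + (a - b) ^ (r - 1) := by
          rw [abs_of_neg hb]
          gcongr <;> linarith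
      _ = 2 * (a - b) ^ (r - 1) := (two_mul _).symm

theorem abs_signedPow_sub_le_of_two_le {r : ℝ} (hr : 2 ≤ r) (a b : ℝ) :
    |signedPow r a - signedPow r b| ≤ (r - 1) * (|a - b| * max |a| |b| ^ (r - 2)) := by
  have hr1 : r ≠ 1 := by linarith
  induction a, b using symmetric_induction_abs_le with
  | swap a b h => rwa [abs_sub_comm, abs_sub_comm b, max_comm]
  | neg a b h =>
    rwa [signedPow_neg, signedPow_neg, neg_sub_neg, neg_sub_neg, abs_neg, abs_neg, abs_sub_comm,
      abs_sub_comm b]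
  | of_abs_le a b hba => ?_
  have ha : 0 ≤ a := (abs_nonneg b).trans hba
  have hle : signedPow r b ≤ signedPow r a := by
    rw [signedPow_of_nonneg hr1 ha]
    refine (le_abs_self _).trans ?_
    rw [abs_signedPow hr1]
    gcongr
    linarith
  rw [abs_of_nonneg ha, max_eq_left hba, abs_of_nonneg (sub_nonneg.2 hle),
    abs_of_nonneg (sub_nonneg.2 ((le_abs_self b).trans hba))]
  rcases le_or_gt 0 b with hb | hb
  · rw [signedPow_of_nonneg hr1 ha, signedPow_of_nonneg hr1 hb,
      show r - 2 = r - 1 - 1 by ring]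
    exact rpow_sub_rpow_le (by linarith) hb ((le_abs_self b).trans hba)
  · calc signedPow r a - signedPow r b ≤ a * a ^ (r - 2) - b * a ^ (r - 2) := by
          rw [signedPow, signedPow, abs_of_nonneg ha]
          have : |b| ^ (r - 2) ≤ a ^ (r - 2) := by gcongr
          nlinarith
      _ = 1 * ((a - b) * a ^ (r - 2)) := by ring
      _ ≤ (r - 1) * ((a - b) * a ^ (r - 2)) := by
          gcongr
          · exact mul_nonneg (by linarith) (by positivity)
          · linarith

theorem mul_signedPow_sub_le_of_le_two {r : ℝ} (hr1 : 1 < r) (hr2 : r ≤ 2) (s x : ℝ) :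
    x * (signedPow r (s + x) - signedPow r s) ≤ 2 * |x| ^ r := by
  have hdiff := abs_signedPow_sub_le_of_le_two hr1 hr2 (s + x) s
  rw [add_sub_cancel_left] at hdiff
  calc x * (signedPow r (s + x) - signedPow r s)
      ≤ |x| * |signedPow r (s + x) - signedPow r s| := abs_mul x _ ▸ le_abs_self _
    _ ≤ |x| * (2 * |x| ^ (r - 1)) := by gcongr
    _ = 2 * (|x| * |signedPow r x|) := by rw [abs_signedPow hr1.ne']; ring
    _ = 2 * |x| ^ r := by
        rw [← abs_mul, mul_signedPow (by linarith), abs_of_nonneg (by positivity)]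

theorem mul_signedPow_sub_le_of_two_le {r : ℝ} (hr : 2 ≤ r) (s x : ℝ) :
    x * (signedPow r (s + x) - signedPow r s) ≤
      (r - 1) * 2 ^ (r - 2) * (x ^ 2 * |s| ^ (r - 2) + |x| ^ r) := by
  have hmax : max |s + x| |s| ^ (r - 2) ≤ 2 ^ (r - 2) * (|s| ^ (r - 2) + |x| ^ (r - 2)) := by
    have hle : max |s + x| |s| ≤ 2 * max |s| |x| := by
      have := abs_add_le s x
      have := le_max_left |s| |x|
      have := le_max_right |s| |x|
      exact max_le (by linarith) (by linarith [abs_nonneg x])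
    have hr' : 0 ≤ r - 2 := by linarith
    calc max |s + x| |s| ^ (r - 2) ≤ (2 * max |s| |x|) ^ (r - 2) := by gcongr
      _ = 2 ^ (r - 2) * max (|s| ^ (r - 2)) (|x| ^ (r - 2)) := by
          rw [Real.mul_rpow two_pos.le (by positivity),
            (Real.monotoneOn_rpow_Ici_of_exponent_nonneg hr').map_max (abs_nonneg s) (abs_nonneg x)]
      _ ≤ 2 ^ (r - 2) * (|s| ^ (r - 2) + |x| ^ (r - 2)) := by
          gcongr
          exact max_le_add_of_nonneg (by positivity) (by positivity)
  have hdiff := abs_signedPow_sub_le_of_two_le hr (s + x) s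
  rw [add_sub_cancel_left] at hdiff
  calc x * (signedPow r (s + x) - signedPow r s)
      ≤ |x| * |signedPow r (s + x) - signedPow r s| := abs_mul x _ ▸ le_abs_self _
    _ ≤ |x| * ((r - 1) * (|x| * (2 ^ (r - 2) * (|s| ^ (r - 2) + |x| ^ (r - 2))))) := by
        have : 0 ≤ r - 1 := by linarith
        refine mul_le_mul_of_nonneg_left (hdiff.trans ?_) (abs_nonneg x)
        gcongr
    _ = (r - 1) * 2 ^ (r - 2) * (|x| ^ 2 * |s| ^ (r - 2) + x * x * |x| ^ (r - 2)) := by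
        rw [← abs_mul_abs_self x]; ring
    _ = (r - 1) * 2 ^ (r - 2) * (x ^ 2 * |s| ^ (r - 2) + |x| ^ r) := by
        rw [sq_abs, mul_assoc x, ← signedPow, mul_signedPow (by linarith)]

end SignedPow

section Independent

variable {Ω : Type*} [MeasurableSpace Ω] {μ : Measure Ω}

theorem integrable_abs_rpow_of_memLp {r : ℝ} (hr : 0 < r) {f : Ω → ℝ}
    (hf : MemLp f (ENNReal.ofReal r) μ) : Integrable (fun ω ↦ |f ω| ^ r) μ := by
  simpa [ENNReal.toReal_ofReal hr.le] using
    hf.integrable_norm_rpow (ENNReal.ofReal_pos.2 hr).ne' ENNReal.ofReal_ne_top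

theorem abs_signedPow_rpow_of_holderConjugate {p q : ℝ} (hpq : p.HolderConjugate q) (s : ℝ) :
    |signedPow p s| ^ q = |s| ^ p := by
  rw [abs_signedPow hpq.lt.ne', ← Real.rpow_mul (abs_nonneg s), hpq.sub_one_mul_conj]

theorem memLp_signedPow {p q : ℝ} (hpq : p.HolderConjugate q) {f : Ω → ℝ}
    (hf : MemLp f (ENNReal.ofReal p) μ) :
    MemLp (fun ω ↦ signedPow p (f ω)) (ENNReal.ofReal q) μ := by
  refine (integrable_norm_rpow_iff
    ((measurable_signedPow p).comp_aemeasurable hf.aemeasurable).aestronglyMeasurable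
    (ENNReal.ofReal_pos.2 hpq.symm.pos).ne' ENNReal.ofReal_ne_top).1 ?_
  simpa only [ENNReal.toReal_ofReal hpq.symm.nonneg, Real.norm_eq_abs, Function.comp_apply,
    abs_signedPow_rpow_of_holderConjugate hpq] using integrable_abs_rpow_of_memLp hpq.pos hf

theorem integrable_mul_of_holderConjugate {p q : ℝ} (hpq : p.HolderConjugate q) {f g : Ω → ℝ}
    (hf : MemLp f (ENNReal.ofReal p) μ) (hg : MemLp g (ENNReal.ofReal q) μ) :
    Integrable (fun ω ↦ f ω * g ω) μ :=
  have := hpq.ennrealOfReal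
  hf.integrable_mul hg

theorem integral_mul_le_of_integral_rpow_le {p q c : ℝ} (hpq : p.HolderConjugate q) (hc : 0 < c)
    {f g : Ω → ℝ} (hf : MemLp f (ENNReal.ofReal p) μ) (hg : MemLp g (ENNReal.ofReal q) μ)
    (h : ∫ ω, |g ω| ^ q ∂μ ≤ c * ∫ ω, f ω * g ω ∂μ) :
    ∫ ω, f ω * g ω ∂μ ≤ c ^ (p - 1) * ∫ ω, |f ω| ^ p ∂μ := by
  set t := c ^ (1 / q)
  have ht : 0 < t := by positivity
  have htq : t ^ q = c := by rw [← Real.rpow_mul hc.le, one_div_mul_cancel hpq.symm.ne_zero,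
    Real.rpow_one]
  have htp : t ^ p = c ^ (p - 1) := by
    rw [← Real.rpow_mul hc.le, ← hpq.div_conj_eq_sub_one, one_div_mul_eq_div]
  have young (ω : Ω) : f ω * g ω ≤ t ^ p / p * |f ω| ^ p + (q * c)⁻¹ * |g ω| ^ q :=
    calc f ω * g ω = (t * f ω) * (g ω / t) := by field_simp
      _ ≤ |t * f ω| ^ p / p + |g ω / t| ^ q / q := Real.young_inequality _ _ hpq
      _ = t ^ p / p * |f ω| ^ p + (q * c)⁻¹ * |g ω| ^ q := by
          rw [abs_mul, abs_div, abs_of_pos ht, Real.mul_rpow ht.le (abs_nonneg _),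
            Real.div_rpow (abs_nonneg _) ht.le, htq]
          field_simp
  have hfint := (integrable_abs_rpow_of_memLp hpq.pos hf).const_mul (t ^ p / p)
  have hgint := (integrable_abs_rpow_of_memLp hpq.symm.pos hg).const_mul (q * c)⁻¹
  have hint : ∫ ω, f ω * g ω ∂μ ≤
      c ^ (p - 1) / p * ∫ ω, |f ω| ^ p ∂μ + (q * c)⁻¹ * ∫ ω, |g ω| ^ q ∂μ := by
    rw [← htp, ← integral_const_mul, ← integral_const_mul, ← integral_add hfint hgint]
    exact integral_mono (integrable_mul_of_holderConjugate hpq hf hg) (hfint.add hgint) young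
  have habsorb : (q * c)⁻¹ * ∫ ω, |g ω| ^ q ∂μ ≤ (1 - p⁻¹) * ∫ ω, f ω * g ω ∂μ := by
    have hq := hpq.symm.pos
    rw [hpq.one_sub_inv, mul_inv, mul_assoc]
    gcongr
    rwa [inv_mul_le_iff₀ hc]
  have hp := hpq.pos
  have : p⁻¹ * ∫ ω, f ω * g ω ∂μ ≤ p⁻¹ * (c ^ (p - 1) * ∫ ω, |f ω| ^ p ∂μ) := by
    calc _ ≤ c ^ (p - 1) / p * ∫ ω, |f ω| ^ p ∂μ := by linarith
      _ = _ := by field_simp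
  exact le_of_mul_le_mul_left this (by positivity)

theorem integrable_sq_mul_abs_rpow_of_indepFun [IsFiniteMeasure μ] {p : ℝ} (hp : 2 < p)
    {X T : Ω → ℝ} (hTX : IndepFun T X μ) (hX : MemLp X (ENNReal.ofReal p) μ)
    (hT : MemLp T (ENNReal.ofReal p) μ) : Integrable (fun ω ↦ X ω ^ 2 * |T ω| ^ (p - 2)) μ := by
  have hX2 : Integrable (fun ω ↦ X ω ^ 2) μ :=
    (hX.mono_exponent (by simpa using ENNReal.ofReal_le_ofReal hp.le)).integrable_sq
  have hTp : Integrable (fun ω ↦ |T ω| ^ (p - 2)) μ := integrable_abs_rpow_of_memLp (by linarith)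
    (hT.mono_exponent (ENNReal.ofReal_le_ofReal (by linarith)))
  exact (hTX.symm.comp (φ := fun x ↦ x ^ 2) (ψ := fun t ↦ |t| ^ (p - 2))
    (by fun_prop) (by fun_prop)).integrable_mul hX2 hTp

theorem integral_sq_mul_abs_rpow_of_indepFun {a : ℝ} {X T : Ω → ℝ} (hTX : IndepFun T X μ)
    (hX : AEStronglyMeasurable X μ) (hT : AEStronglyMeasurable T μ) :
    ∫ ω, X ω ^ 2 * |T ω| ^ a ∂μ = (∫ ω, X ω ^ 2 ∂μ) * ∫ ω, |T ω| ^ a ∂μ :=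
  (hTX.symm.comp (φ := fun x ↦ x ^ 2) (ψ := fun t ↦ |t| ^ a)
    (by fun_prop) (by fun_prop)).integral_mul_eq_mul_integral (hX.pow 2)
    (hT.aemeasurable.abs.pow_const a).aestronglyMeasurable

theorem integral_mul_signedPow_eq_zero_of_indepFun {r : ℝ} {X T : Ω → ℝ}
    (hTX : IndepFun T X μ) (hX : AEStronglyMeasurable X μ) (hT : AEMeasurable T μ)
    (hX0 : ∫ ω, X ω ∂μ = 0) : ∫ ω, X ω * signedPow r (T ω) ∂μ = 0 := by
  have hind := hTX.symm.comp measurable_id (measurable_signedPow r)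
  have := hind.integral_mul_eq_mul_integral hX
    ((measurable_signedPow r).comp_aemeasurable hT).aestronglyMeasurable
  simpa [hX0] using this

theorem integral_abs_rpow_le_add_of_indepFun {p : ℝ} (hp : 1 < p) {X T : Ω → ℝ}
    (hTX : IndepFun T X μ) (hX : MemLp X (ENNReal.ofReal p) μ) (hT : MemLp T (ENNReal.ofReal p) μ)
    (hX0 : ∫ ω, X ω ∂μ = 0) : ∫ ω, |T ω| ^ p ∂μ ≤ ∫ ω, |T ω + X ω| ^ p ∂μ := by
  have hpq := Real.HolderConjugate.conjExponent hp
  have hφ := memLp_signedPow hpq hT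
  have hself : ∫ ω, (T ω + X ω) * signedPow p (T ω) ∂μ = ∫ ω, |T ω| ^ p ∂μ := by
    simp only [add_mul]
    rw [integral_add (integrable_mul_of_holderConjugate hpq hT hφ)
      (integrable_mul_of_holderConjugate hpq hX hφ),
      integral_mul_signedPow_eq_zero_of_indepFun hTX hX.aestronglyMeasurable hT.aemeasurable hX0]
    simp only [mul_signedPow hpq.ne_zero, add_zero]
  have := integral_mul_le_of_integral_rpow_le hpq one_pos (hT.add hX) hφ
    (by simp only [abs_signedPow_rpow_of_holderConjugate hpq, Pi.add_apply, hself, one_mul,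
      le_refl])
  simpa only [Pi.add_apply, hself, Real.one_rpow, one_mul] using this

variable {ι : Type*} {X : ι → Ω → ℝ}

theorem indepFun_sum_erase [DecidableEq ι] (hX : ∀ i, AEMeasurable (X i) μ) (hind : iIndepFun X μ)
    (s : Finset ι) (i : ι) : IndepFun (fun ω ↦ ∑ j ∈ s.erase i, X j ω) (X i) μ := by
  simpa only [Finset.sum_fn] using hind.indepFun_finsetSum_of_notMem₀ hX (notMem_erase i s)

theorem integral_abs_sum_rpow_eq [DecidableEq ι] {p : ℝ} (hp : 1 < p)
    (hX : ∀ i, MemLp (X i) (ENNReal.ofReal p) μ)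
    (hind : iIndepFun X μ) (hX0 : ∀ i, ∫ ω, X i ω ∂μ = 0) (s : Finset ι) :
    ∫ ω, |∑ i ∈ s, X i ω| ^ p ∂μ = ∑ i ∈ s, ∫ ω, X i ω *
      (signedPow p (∑ j ∈ s.erase i, X j ω + X i ω) - signedPow p (∑ j ∈ s.erase i, X j ω)) ∂μ := by
  have hpq := Real.HolderConjugate.conjExponent hp
  have hint (i : ι) (t : Finset ι) :
      Integrable (fun ω ↦ X i ω * signedPow p (∑ j ∈ t, X j ω)) μ :=
    integrable_mul_of_holderConjugate hpq (hX i)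
      (memLp_signedPow hpq (memLp_finsetSum t fun j _ ↦ hX j))
  simp only [← mul_signedPow hpq.ne_zero (∑ i ∈ s, X i _), sum_mul]
  rw [integral_finsetSum _ fun i _ ↦ hint i s]
  refine sum_congr rfl fun i hi ↦ ?_
  have hzero := integral_mul_signedPow_eq_zero_of_indepFun (r := p)
    (indepFun_sum_erase (fun j ↦ (hX j).aemeasurable) hind s i)
    (hX i).aestronglyMeasurable (aemeasurable_fun_sum _ fun j _ ↦ (hX j).aemeasurable) (hX0 i)
  simp only [sum_erase_add _ _ hi, mul_sub]
  rw [integral_sub (hint i s) (hint i _), hzero, sub_zero]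

theorem integral_abs_sum_rpow_le [DecidableEq ι] {p : ℝ} (hp : 1 < p)
    (hX : ∀ i, MemLp (X i) (ENNReal.ofReal p) μ) (hind : iIndepFun X μ)
    (hX0 : ∀ i, ∫ ω, X i ω ∂μ = 0) {G : ℝ → ℝ → ℝ}
    (hG : ∀ s x, x * (signedPow p (s + x) - signedPow p s) ≤ G s x) (s : Finset ι)
    (hint : ∀ i ∈ s, Integrable (fun ω ↦ G (∑ j ∈ s.erase i, X j ω) (X i ω)) μ) :
    ∫ ω, |∑ i ∈ s, X i ω| ^ p ∂μ ≤ ∑ i ∈ s, ∫ ω, G (∑ j ∈ s.erase i, X j ω) (X i ω) ∂μ := by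
  have hpq := Real.HolderConjugate.conjExponent hp
  rw [integral_abs_sum_rpow_eq hp hX hind hX0]
  refine sum_le_sum fun i hi ↦ integral_mono ?_ (hint i hi) fun ω ↦ hG _ _
  have hT : MemLp (fun ω ↦ ∑ j ∈ s.erase i, X j ω) (ENNReal.ofReal p) μ :=
    memLp_finsetSum _ fun j _ ↦ hX j
  exact integrable_mul_of_holderConjugate hpq (hX i)
    ((memLp_signedPow hpq (hT.add (hX i))).sub (memLp_signedPow hpq hT))

theorem integral_abs_sum_rpow_le_of_le_two {r : ℝ} (hr1 : 1 < r) (hr2 : r ≤ 2)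
    (hX : ∀ i, MemLp (X i) (ENNReal.ofReal r) μ) (hind : iIndepFun X μ)
    (hX0 : ∀ i, ∫ ω, X i ω ∂μ = 0) (s : Finset ι) :
    ∫ ω, |∑ i ∈ s, X i ω| ^ r ∂μ ≤ 2 * ∑ i ∈ s, ∫ ω, |X i ω| ^ r ∂μ := by
  classical
  have := integral_abs_sum_rpow_le hr1 hX hind hX0 (G := fun _ x ↦ 2 * |x| ^ r)
    (mul_signedPow_sub_le_of_le_two hr1 hr2) s
    fun i _ ↦ (integrable_abs_rpow_of_memLp (by linarith) (hX i)).const_mul 2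
  simpa only [integral_const_mul, ← mul_sum] using this

theorem integral_abs_rpow_le_rpow_integral [IsProbabilityMeasure μ] {a r : ℝ} (ha : 0 ≤ a)
    (har : a ≤ r) (hr : 0 < r) {f : Ω → ℝ} (hf : MemLp f (ENNReal.ofReal r) μ) :
    ∫ ω, |f ω| ^ a ∂μ ≤ (∫ ω, |f ω| ^ r ∂μ) ^ (a / r) := by
  have hfr := integrable_abs_rpow_of_memLp hr hf
  have hpow (ω : Ω) : (|f ω| ^ r) ^ (a / r) = |f ω| ^ a := by
    rw [← Real.rpow_mul (abs_nonneg _), mul_div_cancel₀ _ hr.ne']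
  have hfa : Integrable (fun ω ↦ |f ω| ^ a) μ := by
    rcases ha.eq_or_lt with rfl | ha0
    · simp
    · exact integrable_abs_rpow_of_memLp ha0 (hf.mono_exponent (ENNReal.ofReal_le_ofReal har))
  have := (Real.concaveOn_rpow (div_nonneg ha hr.le) (div_le_one_of_le₀ har hr.le)).le_map_integral
    (Real.continuous_rpow_const (div_nonneg ha hr.le)).continuousOn isClosed_Ici
    (ae_of_all _ fun ω ↦ Real.rpow_nonneg (abs_nonneg (f ω)) r) hfr
    (by simpa only [Function.comp_def, hpow] using hfa)
  simpa only [hpow] using this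

/-- The constant of Rosenthal's inequality `integral_abs_sum_rpow_le_of_two_lt` produced by the
proof below; it is not optimal. -/
def rosenthalConst (p : ℝ) : ℝ := p * ((p - 1) * 2 ^ (p - 2)) ^ (p / 2)

theorem rosenthalConst_pos {p : ℝ} (hp : 2 < p) : 0 < rosenthalConst p := by
  have : 0 < p - 1 := by linarith
  unfold rosenthalConst
  positivity

theorem le_rosenthalConst_mul_of_le {p U V D : ℝ} (hp : 2 < p) (hU : 0 ≤ U) (hV : 0 ≤ V)
    (hD : 0 ≤ D) (h : U ≤ (p - 1) * 2 ^ (p - 2) * (V * U ^ ((p - 2) / p) + D)) :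
    U ≤ rosenthalConst p * (V ^ (p / 2) + D) := by
  rw [rosenthalConst]
  set K := (p - 1) * 2 ^ (p - 2)
  have hK : 1 ≤ K := one_le_mul_of_one_le_of_one_le (by linarith)
    (Real.one_le_rpow one_le_two (by linarith))
  have hK0 : 0 ≤ K := zero_le_one.trans hK
  have hp2 : p - 2 ≠ 0 := by linarith
  have hpq : (p / 2).HolderConjugate (p / (p - 2)) :=
    Real.holderConjugate_iff.2 ⟨by linarith, by field_simp; ring⟩
  have young := Real.young_inequality_of_nonneg (mul_nonneg hK0 hV)
    (Real.rpow_nonneg hU ((p - 2) / p)) hpq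
  rw [← Real.rpow_mul hU, div_mul_div_cancel₀ (by linarith), div_self hp2, Real.rpow_one,
    Real.mul_rpow hK0 hV] at young
  have absorb : U ≤ K ^ (p / 2) * V ^ (p / 2) + p / 2 * (K * D) := by
    have : U * (2 / p) ≤ (K ^ (p / 2) * V ^ (p / 2) + p / 2 * (K * D)) * (2 / p) := by
      have hsplit : U / (p / (p - 2)) = U - U * (2 / p) := by field_simp
      have hleft : (K ^ (p / 2) * V ^ (p / 2) + p / 2 * (K * D)) * (2 / p) =
        K ^ (p / 2) * V ^ (p / 2) / (p / 2) + K * D := by field_simp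
      linarith
    exact le_of_mul_le_mul_right this (by positivity)
  have hKp : K ≤ K ^ (p / 2) := Real.self_le_rpow_of_one_le hK (by linarith)
  calc U ≤ K ^ (p / 2) * V ^ (p / 2) + p / 2 * (K * D) := absorb
    _ ≤ p * (K ^ (p / 2) * V ^ (p / 2)) + p * (K ^ (p / 2) * D) := by
        refine add_le_add (le_mul_of_one_le_left (by positivity) (by linarith)) ?_
        gcongr
        linarith
    _ = p * K ^ (p / 2) * (V ^ (p / 2) + D) := by ring

theorem integral_abs_sum_rpow_le_of_two_lt [IsProbabilityMeasure μ] {p : ℝ} (hp : 2 < p)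
    (hX : ∀ i, MemLp (X i) (ENNReal.ofReal p) μ) (hind : iIndepFun X μ)
    (hX0 : ∀ i, ∫ ω, X i ω ∂μ = 0) (s : Finset ι) :
    ∫ ω, |∑ i ∈ s, X i ω| ^ p ∂μ ≤ rosenthalConst p *
      ((∑ i ∈ s, ∫ ω, X i ω ^ 2 ∂μ) ^ (p / 2) + ∑ i ∈ s, ∫ ω, |X i ω| ^ p ∂μ) := by
  classical
  have hp1 : 1 < p := by linarith
  have hp0 : 0 < p := by linarith
  have hS (t : Finset ι) : MemLp (fun ω ↦ ∑ j ∈ t, X j ω) (ENNReal.ofReal p) μ :=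
    memLp_finsetSum t fun j _ ↦ hX j
  have hindep := indepFun_sum_erase (fun j ↦ (hX j).aemeasurable) hind s
  have hprod (i : ι) := integrable_sq_mul_abs_rpow_of_indepFun hp
    (hindep i) (hX i) (hS _)
  have hXp (i : ι) := integrable_abs_rpow_of_memLp hp0 (hX i)
  have hT (i : ι) (hi : i ∈ s) : ∫ ω, |∑ j ∈ s.erase i, X j ω| ^ (p - 2) ∂μ ≤
      (∫ ω, |∑ j ∈ s, X j ω| ^ p ∂μ) ^ ((p - 2) / p) := by
    refine (integral_abs_rpow_le_rpow_integral (by linarith) (by linarith) hp0 (hS _)).trans ?_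
    refine Real.rpow_le_rpow (by positivity) ?_ (div_nonneg (by linarith) hp0.le)
    simpa only [sum_erase_add _ _ hi] using integral_abs_rpow_le_add_of_indepFun hp1
      (hindep i) (hX i) (hS _) (hX0 i)
  refine le_rosenthalConst_mul_of_le hp (by positivity) (by positivity) (by positivity) ?_
  calc _ ≤ _ := integral_abs_sum_rpow_le hp1 hX hind hX0
          (mul_signedPow_sub_le_of_two_le hp.le) s
          fun i _ ↦ ((hprod i).add (hXp i)).const_mul _
    _ = ∑ i ∈ s, (p - 1) * 2 ^ (p - 2) * ((∫ ω, X i ω ^ 2 ∂μ) *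
          (∫ ω, |∑ j ∈ s.erase i, X j ω| ^ (p - 2) ∂μ) + ∫ ω, |X i ω| ^ p ∂μ) := by
        refine sum_congr rfl fun i _ ↦ ?_
        rw [integral_const_mul, integral_add (hprod i) (hXp i),
          integral_sq_mul_abs_rpow_of_indepFun (hindep i) (hX i).aestronglyMeasurable
            (hS _).aestronglyMeasurable]
    _ ≤ _ := by
        rw [sum_mul, ← sum_add_distrib, mul_sum]
        have : 0 < p - 1 := by linarith
        gcongr with i hi
        exact hT i hi

end Independent

section RosenthalSystem

variable {Ω ι : Type*} [MeasurableSpace Ω] {μ : Measure Ω}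

theorem sum_rpow_le_rpow_sum (s : Finset ι) {t : ι → ℝ} (ht : ∀ i, 0 ≤ t i) {r : ℝ} (hr : 1 ≤ r) :
    ∑ i ∈ s, t i ^ r ≤ (∑ i ∈ s, t i) ^ r := by
  have hsplit {c : ℝ} (hc : 0 ≤ c) : c ^ r = c * c ^ (r - 1) := by
    rw [← Real.rpow_one_add' hc (by linarith), add_sub_cancel]
  rw [hsplit (sum_nonneg fun i _ ↦ ht i), sum_mul]
  refine sum_le_sum fun i hi ↦ ?_
  rw [hsplit (ht i)]
  have := ht i
  gcongr
  exact single_le_sum (fun j _ ↦ ht j) hi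

theorem iIndepFun_const_mul {X : ι → Ω → ℝ} (hind : iIndepFun X μ) (a : ι → ℝ) :
    iIndepFun (fun i ω ↦ a i * X i ω) μ :=
  hind.comp (fun i x ↦ a i * x) fun i ↦ measurable_const_mul (a i)

theorem sum_abs_integral_mul_rpow_le {r s : ℝ} (hsr : s.HolderConjugate r) (hr : r ≤ 2)
    {Z : ι → Ω → ℝ} (hZ : ∀ i, MemLp (Z i) (ENNReal.ofReal r) μ) (hind : iIndepFun Z μ)
    (hZ0 : ∀ i, ∫ ω, Z i ω ∂μ = 0) (hZ1 : ∀ i, ∫ ω, |Z i ω| ^ r ∂μ ≤ 1) {g : Ω → ℝ}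
    (hg : MemLp g (ENNReal.ofReal s) μ) (t : Finset ι) :
    ∑ i ∈ t, |∫ ω, g ω * Z i ω ∂μ| ^ s ≤ 2 ^ (s - 1) * ∫ ω, |g ω| ^ s ∂μ := by
  set d : ι → ℝ := fun i ↦ signedPow s (∫ ω, g ω * Z i ω ∂μ)
  have hdZ (i : ι) : MemLp (fun ω ↦ d i * Z i ω) (ENNReal.ofReal r) μ := (hZ i).const_mul (d i)
  have hpair : ∫ ω, g ω * ∑ i ∈ t, d i * Z i ω ∂μ = ∑ i ∈ t, |∫ ω, g ω * Z i ω ∂μ| ^ s := by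
    simp only [mul_sum]
    rw [integral_finsetSum _ fun i _ ↦ integrable_mul_of_holderConjugate hsr hg (hdZ i)]
    refine sum_congr rfl fun i _ ↦ ?_
    rw [← mul_signedPow hsr.ne_zero, mul_comm, ← integral_const_mul]
    simp only [d, mul_left_comm]
  have hT : ∫ ω, |∑ i ∈ t, d i * Z i ω| ^ r ∂μ ≤ 2 * ∫ ω, g ω * ∑ i ∈ t, d i * Z i ω ∂μ := by
    rw [hpair]
    refine (integral_abs_sum_rpow_le_of_le_two hsr.symm.lt hr hdZ
      (iIndepFun_const_mul hind d)
      (fun i ↦ by rw [integral_const_mul, hZ0, mul_zero]) t).trans ?_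
    gcongr with i
    simp only [abs_mul, Real.mul_rpow (abs_nonneg _) (abs_nonneg _), integral_const_mul]
    rw [abs_signedPow_rpow_of_holderConjugate hsr]
    exact mul_le_of_le_one_right (by positivity) (hZ1 i)
  rw [← hpair]
  exact integral_mul_le_of_integral_rpow_le hsr two_pos hg
    (memLp_finsetSum t fun i _ ↦ hdZ i) hT

/-- A Rosenthal system with weights `v`: independent mean zero random variables `X i` with
`E (X i) ^ 2 = v i ^ 2` and with the moments of the exponent `p` and of its conjugate exponent that
make `a ↦ ∑ i, a i • X i` and `g ↦ (E (g * X i) / v i ^ 2)ᵢ` bounded between `L^p` and `X_{p,v}`. -/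
structure IsRosenthalSystem (p : ℝ) (v : ι → ℝ) (X : ι → Ω → ℝ) (μ : Measure Ω) : Prop where
  memLp : ∀ i, MemLp (X i) (ENNReal.ofReal p) μ
  indep : iIndepFun X μ
  integral_eq_zero : ∀ i, ∫ ω, X i ω ∂μ = 0
  integral_sq : ∀ i, ∫ ω, X i ω ^ 2 ∂μ = v i ^ 2
  integral_abs_rpow_le : ∀ i, ∫ ω, |X i ω| ^ p ∂μ ≤ 1 + v i ^ p
  integral_abs_rpow_conjExponent_le :
    ∀ i, ∫ ω, |X i ω| ^ p.conjExponent ∂μ ≤ v i ^ (2 * p.conjExponent)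

namespace IsRosenthalSystem

variable {p : ℝ} {v : ι → ℝ} {X : ι → Ω → ℝ}

theorem integral_mul [DecidableEq ι] (h : IsRosenthalSystem p v X μ) (i j : ι) :
    ∫ ω, X i ω * X j ω ∂μ = if i = j then v j ^ 2 else 0 := by
  split_ifs with hij
  · simp only [hij, ← sq, h.integral_sq]
  · exact ((h.indep.indepFun hij).integral_mul_eq_mul_integral (h.memLp i).aestronglyMeasurable
      (h.memLp j).aestronglyMeasurable).trans (by rw [h.integral_eq_zero, zero_mul])

variable [IsProbabilityMeasure μ]

theorem memLp_of_le (h : IsRosenthalSystem p v X μ) {r : ℝ} (hr : r ≤ p) (i : ι) :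
    MemLp (X i) (ENNReal.ofReal r) μ :=
  (h.memLp i).mono_exponent (ENNReal.ofReal_le_ofReal hr)

theorem integral_sum_mul_div_sq [Fintype ι] (h : IsRosenthalSystem p v X μ) (hp : 2 ≤ p) {i : ι}
    (hv : v i ≠ 0) (a : ι → ℝ) : (∫ ω, (∑ j, a j * X j ω) * X i ω ∂μ) / v i ^ 2 = a i := by
  classical
  have hL2 (j : ι) : MemLp (X j) 2 μ := by simpa using h.memLp_of_le hp j
  have hint (j : ι) : Integrable (fun ω ↦ a j * (X j ω * X i ω)) μ :=
    ((hL2 j).integrable_mul (hL2 i)).const_mul (a j)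
  simp only [sum_mul, mul_assoc]
  rw [integral_finsetSum _ fun j _ ↦ hint j]
  simp only [integral_const_mul, h.integral_mul, mul_ite, mul_zero, sum_ite_eq', mem_univ, if_true]
  exact mul_div_cancel_right₀ _ (pow_ne_zero 2 hv)

theorem integral_abs_sum_rpow_le (h : IsRosenthalSystem p v X μ) (hp : 2 < p) (hv : ∀ i, 0 < v i)
    (a : ι → ℝ) (t : Finset ι) :
    ∫ ω, |∑ i ∈ t, a i * X i ω| ^ p ∂μ ≤ 2 * rosenthalConst p *
      (∑ i ∈ t, |a i| ^ p + (∑ i ∈ t, (a i * v i) ^ 2) ^ (p / 2)) := by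
  have hdiag : ∑ i ∈ t, |a i * v i| ^ p ≤ (∑ i ∈ t, (a i * v i) ^ 2) ^ (p / 2) := by
    have hpow (i : ι) : |a i * v i| ^ p = ((a i * v i) ^ 2) ^ (p / 2) := by
      rw [← sq_abs, ← Real.rpow_two, ← Real.rpow_mul (abs_nonneg _), mul_div_cancel₀ _ two_ne_zero]
    simp only [hpow]
    exact sum_rpow_le_rpow_sum t (fun i ↦ sq_nonneg _) (by linarith)
  have hmoment (i : ι) : ∫ ω, |a i * X i ω| ^ p ∂μ ≤ |a i| ^ p + |a i * v i| ^ p := by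
    simp only [abs_mul, Real.mul_rpow (abs_nonneg _) (abs_nonneg _), integral_const_mul,
      abs_of_pos (hv i)]
    calc _ ≤ |a i| ^ p * (1 + v i ^ p) := by
          gcongr
          exact h.integral_abs_rpow_le i
      _ = _ := by rw [mul_one_add, Real.mul_rpow (abs_nonneg _) (hv i).le]
  calc ∫ ω, |∑ i ∈ t, a i * X i ω| ^ p ∂μ
      ≤ rosenthalConst p * ((∑ i ∈ t, ∫ ω, (a i * X i ω) ^ 2 ∂μ) ^ (p / 2) +
          ∑ i ∈ t, ∫ ω, |a i * X i ω| ^ p ∂μ) :=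
        integral_abs_sum_rpow_le_of_two_lt hp (fun i ↦ (h.memLp i).const_mul (a i))
          (iIndepFun_const_mul h.indep a)
          (fun i ↦ by rw [integral_const_mul, h.integral_eq_zero, mul_zero]) t
    _ ≤ rosenthalConst p * ((∑ i ∈ t, (a i * v i) ^ 2) ^ (p / 2) +
          ∑ i ∈ t, (|a i| ^ p + |a i * v i| ^ p)) := by
        have := rosenthalConst_pos hp
        simp only [mul_pow, integral_const_mul, h.integral_sq]
        gcongr with i
        exact hmoment i
    _ ≤ 2 * rosenthalConst p *
          (∑ i ∈ t, |a i| ^ p + (∑ i ∈ t, (a i * v i) ^ 2) ^ (p / 2)) := by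
        rw [sum_add_distrib, mul_comm 2, mul_assoc]
        have : 0 ≤ ∑ i ∈ t, |a i| ^ p := by positivity
        exact mul_le_mul_of_nonneg_left (by linarith) (rosenthalConst_pos hp).le

theorem sum_abs_integral_div_rpow_le (h : IsRosenthalSystem p v X μ) (hp : 2 < p)
    (hv : ∀ i, 0 < v i) {g : Ω → ℝ} (hg : MemLp g (ENNReal.ofReal p) μ) (t : Finset ι) :
    ∑ i ∈ t, |(∫ ω, g ω * X i ω ∂μ) / v i ^ 2| ^ p ≤ 2 ^ (p - 1) * ∫ ω, |g ω| ^ p ∂μ := by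
  have hpq := Real.HolderConjugate.conjExponent (by linarith : 1 < p)
  have hq : p.conjExponent ≤ 2 := by
    rw [Real.conjExponent, div_le_iff₀ (by linarith)]
    linarith
  have := sum_abs_integral_mul_rpow_le hpq hq (Z := fun i ω ↦ (v i ^ 2)⁻¹ * X i ω)
    (fun i ↦ (h.memLp_of_le (hq.trans hp.le) i).const_mul _)
    (iIndepFun_const_mul h.indep _)
    (fun i ↦ by rw [integral_const_mul, h.integral_eq_zero, mul_zero])
    (fun i ↦ ?_) hg t
  · simp only [mul_left_comm (g _), integral_const_mul] at this
    simpa only [div_eq_inv_mul] using this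
  · have hvi := hv i
    simp only [abs_mul, abs_inv, Real.mul_rpow (inv_nonneg.2 (abs_nonneg _)) (abs_nonneg _),
      integral_const_mul]
    rw [Real.inv_rpow (abs_nonneg _), abs_of_pos (by positivity), inv_mul_le_one₀ (by positivity),
      ← Real.rpow_natCast_mul hvi.le]
    exact h.integral_abs_rpow_conjExponent_le i

theorem sum_integral_div_mul_sq_le (h : IsRosenthalSystem p v X μ) (hp : 2 < p)
    (hv : ∀ i, 0 < v i) {g : Ω → ℝ} (hg : MemLp g (ENNReal.ofReal p) μ) (t : Finset ι) :
    ∑ i ∈ t, ((∫ ω, g ω * X i ω ∂μ) / v i ^ 2 * v i) ^ 2 ≤ 2 * (∫ ω, |g ω| ^ p ∂μ) ^ (2 / p) := by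
  have := sum_abs_integral_mul_rpow_le .two_two le_rfl (Z := fun i ω ↦ (v i)⁻¹ * X i ω)
    (fun i ↦ (h.memLp_of_le hp.le i).const_mul _)
    (iIndepFun_const_mul h.indep _)
    (fun i ↦ by rw [integral_const_mul, h.integral_eq_zero, mul_zero])
    (fun i ↦ ?_) (hg.mono_exponent (ENNReal.ofReal_le_ofReal hp.le)) t
  · calc _ = ∑ i ∈ t, |∫ ω, g ω * ((v i)⁻¹ * X i ω) ∂μ| ^ (2 : ℝ) := by
          refine sum_congr rfl fun i _ ↦ ?_
          have := (hv i).ne'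
          simp only [mul_left_comm (g _), integral_const_mul]
          rw [Real.rpow_two, sq_abs]
          field_simp
      _ ≤ 2 * ∫ ω, |g ω| ^ (2 : ℝ) ∂μ := by
          simpa only [show (2 : ℝ) - 1 = 1 by norm_num, Real.rpow_one] using this
      _ ≤ _ := by
          gcongr
          exact integral_abs_rpow_le_rpow_integral two_pos.le hp.le (by linarith) hg
  · have hvi := hv i
    simp only [Real.rpow_two, sq_abs, mul_pow, integral_const_mul, h.integral_sq]
    field_simp
    rfl

end IsRosenthalSystem

end RosenthalSystem

section Realization

/-- The symmetric law on three points giving mass `1 - θ` to the middle one. The points `0, 1, 2` of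
`Fin 3` stand for the values `-1, 0, 1`; see `threePointValue`. -/
def threePointLaw (θ : ℝ) : Measure (Fin 3) :=
  ENNReal.ofReal (θ / 2) • Measure.dirac 0 + ENNReal.ofReal (1 - θ) • Measure.dirac 1 +
    ENNReal.ofReal (θ / 2) • Measure.dirac 2

/-- The value in `{-1, 0, 1}` encoded by a point of `Fin 3`. -/
def threePointValue : Fin 3 → ℝ := ![-1, 0, 1]

theorem isProbabilityMeasure_threePointLaw {θ : ℝ} (h0 : 0 ≤ θ) (h1 : θ ≤ 1) :
    IsProbabilityMeasure (threePointLaw θ) := by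
  constructor
  simp only [threePointLaw, Measure.coe_add, Measure.coe_smul, Pi.add_apply, Pi.smul_apply,
    measure_univ, smul_eq_mul, mul_one]
  rw [← ENNReal.ofReal_add (by positivity) (by linarith), ← ENNReal.ofReal_add (by linarith)
    (by positivity), show θ / 2 + (1 - θ) + θ / 2 = 1 by ring, ENNReal.ofReal_one]

theorem integral_threePointLaw {θ : ℝ} (h0 : 0 ≤ θ) (h1 : θ ≤ 1) (f : Fin 3 → ℝ) :
    ∫ k, f k ∂threePointLaw θ = θ / 2 * f 0 + (1 - θ) * f 1 + θ / 2 * f 2 := by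
  have := isProbabilityMeasure_threePointLaw h0 h1
  have hint (k : Fin 3) {c : ℝ} : Integrable f (ENNReal.ofReal c • Measure.dirac k) :=
    Integrable.of_finite.smul_measure ENNReal.ofReal_ne_top
  rw [threePointLaw, integral_add_measure ((hint 0).add_measure (hint 1)) (hint 2),
    integral_add_measure (hint 0) (hint 1)]
  simp only [integral_smul_measure, integral_dirac, smul_eq_mul,
    ENNReal.toReal_ofReal ((by positivity : 0 ≤ θ / 2)), ENNReal.toReal_ofReal (sub_nonneg.2 h1)]

theorem integral_const_mul_threePointValue {θ : ℝ} (h0 : 0 ≤ θ) (h1 : θ ≤ 1) (c : ℝ) :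
    ∫ k, c * threePointValue k ∂threePointLaw θ = 0 := by
  rw [integral_threePointLaw h0 h1]
  simp [threePointValue]

theorem integral_abs_threePointValue_rpow {θ c r : ℝ} (h0 : 0 ≤ θ) (h1 : θ ≤ 1) (hc : 0 ≤ c)
    (hr : r ≠ 0) : ∫ k, |c * threePointValue k| ^ r ∂threePointLaw θ = θ * c ^ r := by
  rw [integral_threePointLaw h0 h1]
  simp only [threePointValue, Fin.isValue, Matrix.cons_val_zero, mul_neg, mul_one, abs_neg,
    abs_of_nonneg hc, Matrix.cons_val_one, mul_zero, abs_zero, Real.zero_rpow hr, add_zero,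
    Matrix.cons_val]
  ring

/-- The size of the nonzero values of the member of weight `v` of a Rosenthal system: the least
`c ≥ v` for which the symmetric law on `{-c, 0, c}` with second moment `v ^ 2` has `p`-th moment at
least `1`. -/
def rosenthalHeight (p v : ℝ) : ℝ := max v (v ^ (-(2 / (p - 2))))

variable {p v : ℝ}

theorem rosenthalHeight_pos (hv : 0 < v) : 0 < rosenthalHeight p v :=
  hv.trans_le (le_max_left _ _)

theorem sq_div_rosenthalHeight_le_one (hv : 0 < v) : (v / rosenthalHeight p v) ^ 2 ≤ 1 :=
  pow_le_one₀ (div_nonneg hv.le (rosenthalHeight_pos hv).le)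
    ((div_le_one (rosenthalHeight_pos hv)).2 (le_max_left _ _))

theorem sq_div_rosenthalHeight_mul_rpow (hv : 0 < v) (r : ℝ) :
    (v / rosenthalHeight p v) ^ 2 * rosenthalHeight p v ^ r =
      v ^ 2 * rosenthalHeight p v ^ (r - 2) := by
  rw [Real.rpow_sub (rosenthalHeight_pos hv), Real.rpow_two]
  ring

theorem sq_mul_rosenthalHeight_rpow_le (hp : 2 < p) (hv : 0 < v) :
    v ^ 2 * rosenthalHeight p v ^ (p - 2) ≤ 1 + v ^ p := by
  have hp2 : p - 2 ≠ 0 := by linarith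
  rw [rosenthalHeight, (Real.monotoneOn_rpow_Ici_of_exponent_nonneg
    (by linarith : 0 ≤ p - 2)).map_max hv.le (Real.rpow_nonneg hv.le _),
    mul_max_of_nonneg _ _ (sq_nonneg v), ← Real.rpow_mul hv.le, ← Real.rpow_two,
    ← Real.rpow_add hv, ← Real.rpow_add hv]
  have hexp : 2 + -(2 / (p - 2)) * (p - 2) = 0 := by field_simp; ring
  rw [hexp, Real.rpow_zero, add_sub_cancel]
  exact max_le (by linarith) (by linarith [Real.rpow_nonneg hv.le p])

theorem sq_mul_rosenthalHeight_rpow_conjExponent_le (hp : 2 < p) (hv : 0 < v) :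
    v ^ 2 * rosenthalHeight p v ^ (p.conjExponent - 2) ≤ v ^ (2 * p.conjExponent) := by
  have hp1 : p - 1 ≠ 0 := by linarith
  have hp2 : p - 2 ≠ 0 := by linarith
  have hq : p.conjExponent - 2 = -((p - 2) / (p - 1)) := by
    rw [Real.conjExponent]; field_simp; ring
  calc v ^ 2 * rosenthalHeight p v ^ (p.conjExponent - 2)
      ≤ v ^ 2 * (v ^ (-(2 / (p - 2)))) ^ (p.conjExponent - 2) := by
        gcongr ?_ * ?_
        refine Real.rpow_le_rpow_of_nonpos (by positivity) (le_max_right _ _) ?_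
        rw [hq, neg_nonpos]
        exact div_nonneg (by linarith) (by linarith)
    _ = v ^ (2 * p.conjExponent) := by
        rw [← Real.rpow_mul hv.le, ← Real.rpow_two, ← Real.rpow_add hv, hq, Real.conjExponent]
        congr 1
        field_simp
        ring

theorem exists_isRosenthalSystem {ι : Type*} [Finite ι] {p : ℝ} (hp : 2 < p) {v : ι → ℝ}
    (hv : ∀ i, 0 < v i) : ∃ (X : ι → (ι → Fin 3) → ℝ) (μ : Measure (ι → Fin 3)),
      IsProbabilityMeasure μ ∧ IsRosenthalSystem p v X μ := by
  cases nonempty_fintype ι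
  set c : ι → ℝ := fun i ↦ rosenthalHeight p (v i)
  set θ : ι → ℝ := fun i ↦ (v i / c i) ^ 2
  have hc (i : ι) : 0 ≤ c i := (rosenthalHeight_pos (hv i)).le
  have hθ0 (i : ι) : 0 ≤ θ i := sq_nonneg _
  have hθ1 (i : ι) : θ i ≤ 1 := sq_div_rosenthalHeight_le_one (hv i)
  have := fun i ↦ isProbabilityMeasure_threePointLaw (hθ0 i) (hθ1 i)
  have hcoord (i : ι) (f : Fin 3 → ℝ) :
      ∫ ω, f (ω i) ∂Measure.pi (fun j ↦ threePointLaw (θ j)) = ∫ k, f k ∂threePointLaw (θ i) :=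
    integral_comp_eval .of_discrete
  have hmoment (i : ι) {r : ℝ} (hr : r ≠ 0) :
      ∫ ω, |c i * threePointValue (ω i)| ^ r ∂Measure.pi (fun j ↦ threePointLaw (θ j)) =
        v i ^ 2 * c i ^ (r - 2) := by
    rw [hcoord i fun k ↦ |c i * threePointValue k| ^ r,
      integral_abs_threePointValue_rpow (hθ0 i) (hθ1 i) (hc i) hr]
    exact sq_div_rosenthalHeight_mul_rpow (hv i) r
  have hpq := Real.HolderConjugate.conjExponent (by linarith : 1 < p)
  refine ⟨fun i ω ↦ c i * threePointValue (ω i), Measure.pi fun i ↦ threePointLaw (θ i),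
    inferInstance, ?_, ?_, ?_, ?_, ?_, ?_⟩
  · exact fun i ↦ MemLp.of_discrete
  · exact iIndepFun_pi (X := fun i k ↦ c i * threePointValue k) fun i ↦ .of_discrete
  · exact fun i ↦ (hcoord i fun k ↦ c i * threePointValue k).trans
      (integral_const_mul_threePointValue (hθ0 i) (hθ1 i) (c i))
  · intro i
    simpa only [Real.rpow_two, sq_abs, sub_self, Real.rpow_zero, mul_one] using
      hmoment i two_ne_zero
  · exact fun i ↦ (hmoment i hpq.ne_zero).trans_le (sq_mul_rosenthalHeight_rpow_le hp (hv i))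
  · exact fun i ↦ (hmoment i hpq.symm.ne_zero).trans_le
      (sq_mul_rosenthalHeight_rpow_conjExponent_le hp (hv i))

end Realization

section FiniteBlock

theorem exists_sum_abs_mul_rpow_eq_integral {Ω : Type*} [Fintype Ω] [MeasurableSpace Ω]
    [MeasurableSingletonClass Ω] (μ : Measure Ω) [IsFiniteMeasure μ] {p : ℝ} (hp : 0 < p) :
    ∃ u : Ω → ℝ, (∀ᵐ ω ∂μ, u ω ≠ 0) ∧
      (∀ f : Ω → ℝ, ∑ ω, |u ω * f ω| ^ p = ∫ ω, |f ω| ^ p ∂μ) ∧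
      ∀ g : Ω → ℝ, ∫ ω, |(u ω)⁻¹ * g ω| ^ p ∂μ ≤ ∑ ω, |g ω| ^ p := by
  have hu (ω : Ω) : |μ.real {ω} ^ p⁻¹| ^ p = μ.real {ω} := by
    rw [abs_of_nonneg (by positivity), Real.rpow_inv_rpow measureReal_nonneg hp.ne']
  refine ⟨fun ω ↦ μ.real {ω} ^ p⁻¹, ?_, fun f ↦ ?_, fun g ↦ ?_⟩
  · refine ae_iff_of_countable.2 fun ω hω ↦ ?_
    have : 0 < μ.real {ω} := measureReal_nonneg.lt_of_ne' ((measureReal_ne_zero_iff).2 hω)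
    positivity
  · rw [integral_fintype .of_finite]
    simp only [abs_mul, Real.mul_rpow (abs_nonneg _) (abs_nonneg _), hu, smul_eq_mul]
  · rw [integral_fintype .of_finite]
    simp only [abs_mul, abs_inv, Real.mul_rpow (inv_nonneg.2 (abs_nonneg _)) (abs_nonneg _),
      Real.inv_rpow (abs_nonneg _), hu, smul_eq_mul, ← mul_assoc]
    exact sum_le_sum fun ω _ ↦ mul_le_of_le_one_left (by positivity) mul_inv_le_one

theorem exists_rosenthal_factorization {ι : Type*} [Fintype ι] [DecidableEq ι] {p : ℝ} (hp : 2 < p)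
    {v : ι → ℝ} (hv : ∀ i, 0 < v i) :
    ∃ (A : (ι → ℝ) →ₗ[ℝ] (ι → Fin 3) → ℝ) (B : ((ι → Fin 3) → ℝ) →ₗ[ℝ] ι → ℝ),
      (∀ a, B (A a) = a) ∧
      (∀ a, ∑ ω, |A a ω| ^ p ≤
        2 * rosenthalConst p * (∑ i, |a i| ^ p + (∑ i, (a i * v i) ^ 2) ^ (p / 2))) ∧
      (∀ g, ∑ i, |B g i| ^ p ≤ 2 ^ (p - 1) * ∑ ω, |g ω| ^ p) ∧
      ∀ g, ∑ i, (B g i * v i) ^ 2 ≤ 2 * (∑ ω, |g ω| ^ p) ^ (2 / p) := by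
  obtain ⟨X, μ, _, hX⟩ := exists_isRosenthalSystem hp hv
  obtain ⟨u, hu0, hu, hu'⟩ := exists_sum_abs_mul_rpow_eq_integral μ (by linarith : 0 < p)
  let A : (ι → ℝ) →ₗ[ℝ] (ι → Fin 3) → ℝ :=
    LinearMap.pi fun ω ↦ ∑ i, (u ω * X i ω) • LinearMap.proj i
  have hA (a : ι → ℝ) (ω : ι → Fin 3) : A a ω = u ω * ∑ i, a i * X i ω := by
    simp [A, mul_sum, mul_assoc, mul_comm (a _)]
  let B : ((ι → Fin 3) → ℝ) →ₗ[ℝ] ι → ℝ :=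
    { toFun g i := (∫ ω, (u ω)⁻¹ * g ω * X i ω ∂μ) / v i ^ 2
      map_add' g h := by
        ext i
        simp only [Pi.add_apply, mul_add, add_mul]
        rw [integral_add .of_finite .of_finite, add_div]
      map_smul' c g := by
        ext i
        simp only [Pi.smul_apply, smul_eq_mul, RingHom.id_apply, mul_left_comm _ c, mul_assoc c,
          integral_const_mul, mul_div_assoc] }
  refine ⟨A, B, fun a ↦ ?_, fun a ↦ ?_, fun g ↦ ?_, fun g ↦ ?_⟩
  · ext i
    have hcancel : ∀ᵐ ω ∂μ, (u ω)⁻¹ * A a ω * X i ω = (∑ j, a j * X j ω) * X i ω := by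
      filter_upwards [hu0] with ω hω
      rw [hA, inv_mul_cancel_left₀ hω]
    exact (congrArg (· / v i ^ 2) (integral_congr_ae hcancel)).trans
      (hX.integral_sum_mul_div_sq hp.le (hv i).ne' a)
  · simp only [hA]
    exact (hu _).trans_le (hX.integral_abs_sum_rpow_le hp hv a univ)
  · refine (hX.sum_abs_integral_div_rpow_le hp hv (g := fun ω ↦ (u ω)⁻¹ * g ω) .of_discrete
      univ).trans ?_
    gcongr
    exact hu' g
  · refine (hX.sum_integral_div_mul_sq_le hp hv (g := fun ω ↦ (u ω)⁻¹ * g ω) .of_discrete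
      univ).trans ?_
    gcongr
    exact hu' g

end FiniteBlock

section BlockMap

variable {K ι ι' : Type*} {β γ : K → Type*}

/-- The block-diagonal linear map with blocks `L k`, where `e` and `e'` partition the coordinates
into blocks. -/
def blockMap (e : (Σ k, β k) ≃ ι) (e' : (Σ k, γ k) ≃ ι')
    (L : ∀ k, (β k → ℝ) →ₗ[ℝ] γ k → ℝ) : (ι → ℝ) →ₗ[ℝ] ι' → ℝ :=
  LinearMap.pi fun j ↦ LinearMap.proj (e'.symm j).2 ∘ₗ L (e'.symm j).1 ∘ₗ
    LinearMap.funLeft ℝ ℝ fun b ↦ e ⟨_, b⟩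

theorem blockMap_apply_mk (e : (Σ k, β k) ≃ ι) (e' : (Σ k, γ k) ≃ ι')
    (L : ∀ k, (β k → ℝ) →ₗ[ℝ] γ k → ℝ) (a : ι → ℝ) (k : K) :
    (fun c ↦ blockMap e e' L a (e' ⟨k, c⟩)) = L k fun b ↦ a (e ⟨k, b⟩) := by
  ext c
  suffices ∀ x, x = (⟨k, c⟩ : Σ k, γ k) →
      L x.1 (fun b ↦ a (e ⟨x.1, b⟩)) x.2 = L k (fun b ↦ a (e ⟨k, b⟩)) c from
    this _ (e'.symm_apply_apply _)
  rintro _ rfl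
  rfl

theorem blockMap_blockMap {e : (Σ k, β k) ≃ ι} {e' : (Σ k, γ k) ≃ ι'}
    {A : ∀ k, (β k → ℝ) →ₗ[ℝ] γ k → ℝ} {B : ∀ k, (γ k → ℝ) →ₗ[ℝ] β k → ℝ}
    (hBA : ∀ k a, B k (A k a) = a) (a : ι → ℝ) : blockMap e' e B (blockMap e e' A a) = a := by
  ext i
  obtain ⟨⟨k, b⟩, rfl⟩ := e.surjective i
  rw [congrFun (blockMap_apply_mk e' e B _ k) b, blockMap_apply_mk e e', hBA]

theorem sum_le_sum_blocks [∀ k, Fintype (β k)] [DecidableEq K] (e : (Σ k, β k) ≃ ι) {f : ι → ℝ}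
    (hf : ∀ i, 0 ≤ f i) (s : Finset ι) :
    ∑ i ∈ s, f i ≤ ∑ k ∈ s.image (fun i ↦ (e.symm i).1), ∑ b, f (e ⟨k, b⟩) := by
  have hs : s ⊆ ((s.image fun i ↦ (e.symm i).1).sigma fun _ ↦ univ).map e.toEmbedding := by
    intro i hi
    simpa using ⟨i, hi, rfl⟩
  refine (sum_le_sum_of_subset_of_nonneg hs fun i _ _ ↦ hf i).trans_eq ?_
  rw [sum_map, sum_sigma]
  rfl

theorem sum_blocks_le_of_sum_le [∀ k, Fintype (β k)] (e : (Σ k, β k) ≃ ι) {f : ι → ℝ} {C : ℝ}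
    (h : ∀ s : Finset ι, ∑ i ∈ s, f i ≤ C) (t : Finset K) :
    ∑ k ∈ t, ∑ b, f (e ⟨k, b⟩) ≤ C := by
  have := h ((t.sigma fun _ ↦ univ).map e.toEmbedding)
  rwa [sum_map, sum_sigma] at this

end BlockMap

section LpMap

variable {ι E : Type*} [NormedAddCommGroup E] [NormedSpace ℝ E] {q : ℝ≥0∞} [Fact (1 ≤ q)]

/-- The coordinates of an element of `ℓ^q`, as a linear map. -/
def lpCoords : lp (fun _ : ι ↦ ℝ) q →ₗ[ℝ] ι → ℝ :=
  LinearMap.pi fun i ↦ lp.evalₗ (fun _ ↦ ℝ) q i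

/-- A linear map into sequences with uniformly bounded `ℓ^q` sums, as an operator into `ℓ^q`. -/
def lpOfSumLe (hq : 0 < q.toReal) (L : E →ₗ[ℝ] ι → ℝ) {C : ℝ} (hC : 0 ≤ C)
    (hL : ∀ x (s : Finset ι), ∑ i ∈ s, |L x i| ^ q.toReal ≤ C * ‖x‖ ^ q.toReal) :
    E →L[ℝ] lp (fun _ : ι ↦ ℝ) q :=
  LinearMap.mkContinuous
    { toFun x := ⟨L x, memℓp_gen' (hL x)⟩
      map_add' x y := Subtype.ext (map_add L x y)
      map_smul' c x := Subtype.ext (map_smul L c x) }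
    (C ^ q.toReal⁻¹) fun x ↦ by
      refine lp.norm_le_of_forall_sum_le hq (by positivity) fun s ↦ (hL x s).trans_eq ?_
      rw [Real.mul_rpow (by positivity) (norm_nonneg x), Real.rpow_inv_rpow hC hq.ne']

end LpMap

namespace Xpw

variable [Fact (1 ≤ ENNReal.ofReal p)] {E : Type*} [NormedAddCommGroup E] [NormedSpace ℝ E]

/-- The inclusion of `X_{p,w}` into `ℓ_p`, which forgets the weighted `ℓ_2` norm. -/
def toSeqP : Xpw p w →L[ℝ] SeqP p :=
  ContinuousLinearMap.fst ℝ (SeqP p) Seq2 ∘L (XpwMod p w).subtypeL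

/-- The map `x ↦ w · x` of `X_{p,w}` into `ℓ_2`. -/
def toSeq2 : Xpw p w →L[ℝ] Seq2 :=
  ContinuousLinearMap.snd ℝ (SeqP p) Seq2 ∘L (XpwMod p w).subtypeL

theorem norm_toSeqP (x : Xpw p w) : ‖toSeqP x‖ = nrmP x := rfl

theorem norm_toSeq2 (x : Xpw p w) : ‖toSeq2 x‖ = nrm2 x := rfl

theorem norm_eq_max (x : Xpw p w) : ‖x‖ = max (nrmP x) (nrm2 x) := rfl

theorem toSeq2_apply (x : Xpw p w) (n : ℕ) : toSeq2 x n = w n * toSeqP x n :=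
  (show ↥(XpwMod p w) from x).2 n

theorem toSeqP_injective : Function.Injective (toSeqP : Xpw p w → SeqP p) := fun x y h ↦
  Subtype.ext <| Prod.ext h <| lp.ext <| funext fun n ↦ by
    change toSeq2 x n = toSeq2 y n
    rw [toSeq2_apply, toSeq2_apply, h]

/-- The operator into `X_{p,w}` with prescribed `ℓ_p` and weighted `ℓ_2` components. -/
def lift (S : E →L[ℝ] SeqP p) (T : E →L[ℝ] Seq2) (h : ∀ x n, T x n = w n * S x n) :
    E →L[ℝ] Xpw p w :=
  (S.prod T).codRestrict (XpwMod p w) h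

theorem isClosed_XpwMod : IsClosed (XpwMod p w : Set (SeqP p × Seq2)) := by
  have hP (n : ℕ) : Continuous fun z : SeqP p × Seq2 ↦ z.1 n :=
    (continuous_apply n).comp (lp.uniformContinuous_coe.continuous.comp continuous_fst)
  have h2 (n : ℕ) : Continuous fun z : SeqP p × Seq2 ↦ z.2 n :=
    (continuous_apply n).comp (lp.uniformContinuous_coe.continuous.comp continuous_snd)
  change IsClosed {z : SeqP p × Seq2 | ∀ n, z.2 n = w n * z.1 n}
  rw [Set.ofPred_forall]
  exact isClosed_iInter fun n ↦ isClosed_eq (h2 n) ((hP n).const_mul _)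

instance : CompleteSpace (Xpw p w) := isClosed_XpwMod.completeSpace_coe

end Xpw

section BlockFactorization

variable {ι ι' : Type*} {β γ : ℕ → Type*} [∀ k, Fintype (β k)] [∀ k, Fintype (γ k)]
  {q : ℝ} {u : ι → ℝ} {e : (Σ k, β k) ≃ ι} {e' : (Σ k, γ k) ≃ ι'}

theorem sum_inv_two_pow_le (t : Finset ℕ) : ∑ k ∈ t, ((2 : ℝ) ^ k)⁻¹ ≤ 2 := by
  simp_rw [← inv_pow, ← one_div]
  exact sum_le_hasSum t (fun k _ ↦ by positivity) hasSum_geometric_two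

theorem rpow_sum_mul_two_pow_sq_le {β : Type*} [Fintype β] {u a : β → ℝ} (hq : 0 ≤ q) {N : ℝ}
    (hN : 0 ≤ N) {k : ℕ} (ha : ∑ b, (u b * a b) ^ 2 ≤ ((4 ^ k)⁻¹ * N) ^ 2) :
    (∑ b, (a b * (2 ^ k * u b)) ^ 2) ^ (q / 2) ≤ ((2 ^ k)⁻¹ * N) ^ q :=
  calc (∑ b, (a b * (2 ^ k * u b)) ^ 2) ^ (q / 2)
      = ((2 ^ k) ^ 2 * ∑ b, (u b * a b) ^ 2) ^ (q / 2) := by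
        rw [mul_sum]
        congr! 2 with b
        ring
    _ ≤ ((2 ^ k) ^ 2 * ((4 ^ k)⁻¹ * N) ^ 2) ^ (q / 2) := by gcongr
    _ = (((2 ^ k)⁻¹ * N) ^ (2 : ℝ)) ^ (q / 2) := by
        rw [Real.rpow_two, ← mul_pow, show (4 : ℝ) ^ k = 2 ^ k * 2 ^ k by
          rw [← mul_pow]; norm_num]
        field_simp
    _ = ((2 ^ k)⁻¹ * N) ^ q := by
        rw [← Real.rpow_mul (by positivity), mul_div_cancel₀ _ two_ne_zero]

theorem sum_abs_blockMap_rpow_le {A : ∀ k, (β k → ℝ) →ₗ[ℝ] γ k → ℝ} (hq : 1 ≤ q) {D : ℝ}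
    (hD : 0 ≤ D)
    (hA : ∀ k a, ∑ c, |A k a c| ^ q ≤
      D * (∑ b, |a b| ^ q + (∑ b, (a b * (2 ^ k * u (e ⟨k, b⟩))) ^ 2) ^ (q / 2)))
    {a : ι → ℝ} {M N : ℝ} (hN : 0 ≤ N) (hM : ∀ t, ∑ i ∈ t, |a i| ^ q ≤ M)
    (ha : ∀ k, ∑ b, (u (e ⟨k, b⟩) * a (e ⟨k, b⟩)) ^ 2 ≤ ((4 ^ k)⁻¹ * N) ^ 2)
    (s : Finset ι') :
    ∑ j ∈ s, |blockMap e e' A a j| ^ q ≤ D * (M + (2 * N) ^ q) := by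
  set K := s.image fun j ↦ (e'.symm j).1
  have hblock (k : ℕ) :
      ∑ c, |blockMap e e' A a (e' ⟨k, c⟩)| ^ q ≤
        D * (∑ b, |a (e ⟨k, b⟩)| ^ q + ((2 ^ k)⁻¹ * N) ^ q) := by
    simp_rw [fun c ↦ congrFun (blockMap_apply_mk e e' A a k) c]
    refine (hA k _).trans ?_
    gcongr
    exact rpow_sum_mul_two_pow_sq_le (by positivity) hN (ha k)
  calc ∑ j ∈ s, |blockMap e e' A a j| ^ q
      ≤ ∑ k ∈ K, ∑ c, |blockMap e e' A a (e' ⟨k, c⟩)| ^ q :=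
        sum_le_sum_blocks e' (fun j ↦ by positivity) s
    _ ≤ ∑ k ∈ K, D * (∑ b, |a (e ⟨k, b⟩)| ^ q + ((2 ^ k)⁻¹ * N) ^ q) :=
        sum_le_sum fun k _ ↦ hblock k
    _ = D * (∑ k ∈ K, ∑ b, |a (e ⟨k, b⟩)| ^ q + ∑ k ∈ K, ((2 ^ k)⁻¹ * N) ^ q) := by
        rw [← mul_sum, sum_add_distrib]
    _ ≤ D * (M + (2 * N) ^ q) := by
        gcongr
        · exact sum_blocks_le_of_sum_le e hM K
        · refine (sum_rpow_le_rpow_sum K (fun k ↦ by positivity) hq).trans ?_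
          rw [← sum_mul]
          gcongr
          exact sum_inv_two_pow_le K

theorem sum_abs_blockMap_rpow_le_of_le {B : ∀ k, (γ k → ℝ) →ₗ[ℝ] β k → ℝ} {D : ℝ} (hD : 0 ≤ D)
    (hB : ∀ k g, ∑ b, |B k g b| ^ q ≤ D * ∑ c, |g c| ^ q) {g : ι' → ℝ} {M : ℝ}
    (hM : ∀ t, ∑ j ∈ t, |g j| ^ q ≤ M) (s : Finset ι) :
    ∑ i ∈ s, |blockMap e' e B g i| ^ q ≤ D * M := by
  refine (sum_le_sum_blocks e (fun i ↦ by positivity) s).trans ?_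
  simp_rw [fun k b ↦ congrFun (blockMap_apply_mk e' e B g k) b]
  refine (sum_le_sum fun k _ ↦ hB k _).trans ?_
  rw [← mul_sum]
  gcongr
  exact sum_blocks_le_of_sum_le e' hM _

theorem sum_mul_blockMap_sq_le {B : ∀ k, (γ k → ℝ) →ₗ[ℝ] β k → ℝ} (hq : 0 < q)
    (hB : ∀ k g, ∑ b, (B k g b * (2 ^ k * u (e ⟨k, b⟩))) ^ 2 ≤
      2 * (∑ c, |g c| ^ q) ^ (2 / q)) {g : ι' → ℝ} {M : ℝ}
    (hM : ∀ t, ∑ j ∈ t, |g j| ^ q ≤ M) (s : Finset ι) :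
    ∑ i ∈ s, (u i * blockMap e' e B g i) ^ 2 ≤ 4 * M ^ (2 / q) := by
  have hblock (k : ℕ) :
      ∑ b, (u (e ⟨k, b⟩) * blockMap e' e B g (e ⟨k, b⟩)) ^ 2 ≤
        (2 ^ k)⁻¹ * (2 * M ^ (2 / q)) := by
    have hk : ∑ c, |g (e' ⟨k, c⟩)| ^ q ≤ M := by simpa using sum_blocks_le_of_sum_le e' hM {k}
    calc ∑ b, (u (e ⟨k, b⟩) * blockMap e' e B g (e ⟨k, b⟩)) ^ 2
        = ((2 ^ k)⁻¹) ^ 2 * ∑ b, (B k (fun c ↦ g (e' ⟨k, c⟩)) b * (2 ^ k * u (e ⟨k, b⟩))) ^ 2 := by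
          rw [mul_sum]
          congr! 1 with b
          rw [congrFun (blockMap_apply_mk e' e B g k) b]
          field_simp
      _ ≤ (2 ^ k)⁻¹ * (2 * (∑ c, |g (e' ⟨k, c⟩)| ^ q) ^ (2 / q)) := by
          gcongr
          · exact pow_le_of_le_one (by positivity)
              (inv_le_one_of_one_le₀ (one_le_pow₀ one_le_two)) two_ne_zero
          · exact hB k _
      _ ≤ (2 ^ k)⁻¹ * (2 * M ^ (2 / q)) := by gcongr
  have hM0 : 0 ≤ M := by simpa using hM ∅
  refine (sum_le_sum_blocks e (fun i ↦ sq_nonneg _) s).trans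
    ((sum_le_sum fun k _ ↦ hblock k).trans ?_)
  rw [← sum_mul]
  refine (mul_le_mul_of_nonneg_right (sum_inv_two_pow_le _) (by positivity)).trans_eq ?_
  ring

end BlockFactorization

theorem sum_abs_rpow_le_norm_rpow (hp : 0 < p) (g : SeqP p) (s : Finset ℕ) :
    ∑ n ∈ s, |g n| ^ p ≤ ‖g‖ ^ p := by
  have := lp.sum_rpow_le_norm_rpow (by rwa [ENNReal.toReal_ofReal hp.le]) g s
  rwa [ENNReal.toReal_ofReal hp.le] at this

section Factorization

open Xpw

variable [Fact (1 ≤ ENNReal.ofReal p)] {E : Type*} [NormedAddCommGroup E] [NormedSpace ℝ E]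
  {β γ : ℕ → Type*} [∀ k, Fintype (β k)] [∀ k, Fintype (γ k)]
  {e : (Σ k, β k) ≃ ℕ} {e' : (Σ k, γ k) ≃ ℕ}

theorem exists_continuousLinearMap_eq_blockMap (hp : 1 ≤ p) {J : E →L[ℝ] Xpw p w} {N D : ℝ}
    (hN : 0 ≤ N) (hD : 0 ≤ D)
    (hJ : ∀ k x, ∑ b, toSeq2 (J x) (e ⟨k, b⟩) ^ 2 ≤ ((4 ^ k)⁻¹ * (N * ‖x‖)) ^ 2)
    {A : ∀ k, (β k → ℝ) →ₗ[ℝ] γ k → ℝ}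
    (hA : ∀ k a, ∑ c, |A k a c| ^ p ≤
      D * (∑ b, |a b| ^ p + (∑ b, (a b * (2 ^ k * w (e ⟨k, b⟩))) ^ 2) ^ (p / 2))) :
    ∃ A' : E →L[ℝ] SeqP p, ∀ x n, A' x n = blockMap e e' A (toSeqP (J x)) n := by
  have hp0 : 0 < p := by positivity
  have hpR : (ENNReal.ofReal p).toReal = p := ENNReal.toReal_ofReal hp0.le
  simp only [toSeq2_apply] at hJ
  let J' : E →L[ℝ] SeqP p := toSeqP ∘L J
  have hbound (x : E) (s : Finset ℕ) : ∑ n ∈ s, |blockMap e e' A (J' x) n| ^ p ≤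
      D * (‖J'‖ ^ p + (2 * N) ^ p) * ‖x‖ ^ p := by
    refine (sum_abs_blockMap_rpow_le hp hD hA (by positivity)
      (sum_abs_rpow_le_norm_rpow hp0 (J' x)) (N := N * ‖x‖) (fun k ↦ hJ k x) s).trans ?_
    rw [mul_assoc, add_mul, ← Real.mul_rpow (by positivity) (by positivity),
      ← Real.mul_rpow (by positivity) (by positivity), mul_assoc 2]
    gcongr
    exact J'.le_opNorm x
  exact ⟨lpOfSumLe (hpR.symm ▸ hp0) (blockMap e e' A ∘ₗ lpCoords ∘ₗ J'.toLinearMap)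
    (C := D * (‖J'‖ ^ p + (2 * N) ^ p)) (by positivity) (by rw [hpR]; exact hbound),
    fun x n ↦ rfl⟩

theorem exists_continuousLinearMap_toSeqP_eq_blockMap (hp : 0 < p)
    {B : ∀ k, (γ k → ℝ) →ₗ[ℝ] β k → ℝ} {D : ℝ} (hD : 0 ≤ D)
    (hBp : ∀ k g, ∑ b, |B k g b| ^ p ≤ D * ∑ c, |g c| ^ p)
    (hB2 : ∀ k g, ∑ b, (B k g b * (2 ^ k * w (e ⟨k, b⟩))) ^ 2 ≤
      2 * (∑ c, |g c| ^ p) ^ (2 / p)) :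
    ∃ B' : SeqP p →L[ℝ] Xpw p w, ∀ g n, toSeqP (B' g) n = blockMap e' e B g n := by
  have hpR : (ENNReal.ofReal p).toReal = p := ENNReal.toReal_ofReal hp.le
  have h2R : (2 : ℝ≥0∞).toReal = 2 := ENNReal.toReal_ofNat 2
  let M : SeqP p →ₗ[ℝ] ℕ → ℝ := blockMap e' e B ∘ₗ lpCoords
  let M2 : SeqP p →ₗ[ℝ] ℕ → ℝ := LinearMap.pi fun n ↦ w n • LinearMap.proj n ∘ₗ M
  have hM (g : SeqP p) (s : Finset ℕ) : ∑ n ∈ s, |M g n| ^ p ≤ D * ‖g‖ ^ p :=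
    sum_abs_blockMap_rpow_le_of_le hD hBp (sum_abs_rpow_le_norm_rpow hp g) s
  have hM2 (g : SeqP p) (s : Finset ℕ) : ∑ n ∈ s, |M2 g n| ^ (2 : ℝ) ≤ 4 * ‖g‖ ^ (2 : ℝ) := by
    have := sum_mul_blockMap_sq_le (e' := e') hp hB2 (sum_abs_rpow_le_norm_rpow hp g) s
    rw [← Real.rpow_mul (norm_nonneg g), mul_div_cancel₀ _ hp.ne'] at this
    simp only [Real.rpow_two, sq_abs] at this ⊢
    exact this
  exact ⟨Xpw.lift (lpOfSumLe (hpR.symm ▸ hp) M hD (by rwa [hpR]))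
    (lpOfSumLe (by simp) M2 (C := 4) (by simp) (by rwa [h2R])) fun g n ↦ rfl, fun g n ↦ rfl⟩

theorem exists_comp_eq_of_sum_sq_le (hp : 2 < p) (hw : ∀ n, 0 < w n) (J : E →L[ℝ] Xpw p w)
    {κ : ℕ → ℕ} (hκ : ∀ k, (κ ⁻¹' {k}).Finite) {N : ℝ} (hN : 0 ≤ N)
    (hJ : ∀ k x t, (∀ n ∈ t, κ n = k) →
      ∑ n ∈ t, toSeq2 (J x) n ^ 2 ≤ ((4 ^ k)⁻¹ * (N * ‖x‖)) ^ 2) :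
    ∃ (A : E →L[ℝ] SeqP p) (B : SeqP p →L[ℝ] Xpw p w), B ∘L A = J := by
  have (k : ℕ) : Fintype {n // κ n = k} := (hκ k).fintype
  have hv (k : ℕ) (n : {n // κ n = k}) : 0 < 2 ^ k * w n := mul_pos (by positivity) (hw n)
  choose A B hBA hA hBp hB2 using fun k ↦ exists_rosenthal_factorization hp (hv k)
  let e : (Σ k, {n // κ n = k}) ≃ ℕ := Equiv.sigmaFiberEquiv κ
  have : Infinite (Σ k, {n // κ n = k} → Fin 3) :=
    .of_injective (fun k ↦ ⟨k, 0⟩) fun k l h ↦ congrArg Sigma.fst h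
  obtain ⟨e'⟩ := nonempty_equiv_of_countable (α := Σ k, {n // κ n = k} → Fin 3) (β := ℕ)
  obtain ⟨A', hA'⟩ := exists_continuousLinearMap_eq_blockMap (e := e) (e' := e') (by linarith) hN
    (mul_nonneg zero_le_two (rosenthalConst_pos (by linarith)).le) (fun k x ↦ by
      simpa using! hJ k x (univ.map (Function.Embedding.subtype _)) (by simp)) hA
  obtain ⟨B', hB'⟩ := exists_continuousLinearMap_toSeqP_eq_blockMap (e := e) (e' := e')
    (by positivity) (by positivity) hBp hB2
  refine ⟨A', B', ContinuousLinearMap.ext fun x ↦ toSeqP_injective <| lp.ext <| funext fun n ↦ ?_⟩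
  rw [ContinuousLinearMap.comp_apply, hB', funext (hA' x), blockMap_blockMap hBA]

theorem exists_comp_eq_of_nrm2_le (hp : 2 < p) (hw : ∀ n, 0 < w n) (J : E →L[ℝ] Xpw p w)
    {c : ℝ} (hJ : ∀ x, nrm2 (J x) ≤ c * nrmP (J x)) :
    ∃ (A : E →L[ℝ] SeqP p) (B : SeqP p →L[ℝ] Xpw p w), B ∘L A = J := by
  have hcompact : IsCompactOperator (toSeq2 ∘L J) :=
    isCompactOperator_of_norm_le (toSeqP ∘L J) _ ENNReal.ofReal_ne_top
      (by rwa [ENNReal.toReal_ofReal (by positivity)]) hJ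
  set N := ‖toSeq2 ∘L J‖ + 1
  obtain ⟨κ, hκ, hblock⟩ := exists_blocks_of_isCompactOperator ENNReal.ofNat_ne_top hcompact
    (η := fun k ↦ (4 ^ k)⁻¹ * N) (fun k ↦ by positivity) (by simp [N])
  refine exists_comp_eq_of_sum_sq_le hp hw J hκ (N := N) (by positivity) fun k x t ht ↦ ?_
  simpa [mul_assoc] using hblock k x t ht

end Factorization

section Splitting

theorem mul_norm_le_norm_sub_apply {E : Type*} [NormedAddCommGroup E]
    [NormedSpace ℝ E] {P : E →L[ℝ] E} (hP : ∀ x, P (P x) = P x) {ε : ℝ}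
    (hε : ε * ‖.id ℝ E - P‖ ≤ 1) {z : E} (hz : P z = 0) (x : E) : ε * ‖z‖ ≤ ‖z - P x‖ := by
  rcases le_total 0 ε with hε0 | hε0
  · have hz' : (.id ℝ E - P) (z - P x) = z := by simp [hP, hz]
    calc ε * ‖z‖ = ε * ‖(.id ℝ E - P) (z - P x)‖ := by rw [hz']
      _ ≤ ε * (‖.id ℝ E - P‖ * ‖z - P x‖) := by
        gcongr
        exact (ContinuousLinearMap.id ℝ E - P).le_opNorm _
      _ ≤ ‖z - P x‖ := by
        rw [← mul_assoc]
        exact mul_le_of_le_one_left (norm_nonneg _) hε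
  · exact (mul_nonpos_of_nonpos_of_nonneg hε0 (norm_nonneg z)).trans (norm_nonneg _)

variable {E F H : Type*} [NormedAddCommGroup E] [NormedSpace ℝ E] [CompleteSpace E]
  [NormedAddCommGroup H] [InnerProductSpace ℝ H] [CompleteSpace H]

theorem hasLeftInverse_of_norm_le (S : E →L[ℝ] H) {c : ℝ} (hS : ∀ x, ‖x‖ ≤ c * ‖S x‖) :
    S.HasLeftInverse := by
  have hanti : AntilipschitzWith c.toNNReal S := S.antilipschitz_of_bound fun x ↦
    (hS x).trans (mul_le_mul_of_nonneg_right (Real.le_coe_toNNReal c) (norm_nonneg _))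
  have hclosed : IsClosed (Set.range S) := hanti.isClosed_range S.uniformContinuous
  have : CompleteSpace S.range := hclosed.completeSpace_coe
  exact .of_injective_of_isClosed_range_of_closedComplement_range hanti.injective hclosed
    ⟨S.range.orthogonalProjectionOnto,
      S.range.orthogonalProjectionOnto_mem_subspace_eq_self⟩

theorem hasLeftInverse_prod_of_comp_eq [NormedAddCommGroup F] [NormedSpace ℝ F] {P : E →L[ℝ] E}
    (hP : ∀ x, P (P x) = P x) {A : E →L[ℝ] F} {B : F →L[ℝ] E} (hBA : B ∘L A = P)
    {S : E →L[ℝ] H} {c : ℝ} (hS : ∀ z, P z = 0 → ‖z‖ ≤ c * ‖S z‖) :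
    (A.prod (S ∘L (.id ℝ E - P))).HasLeftInverse := by
  have : CompleteSpace P.ker := P.isClosed_ker.completeSpace_coe
  obtain ⟨L, hL⟩ := hasLeftInverse_of_norm_le (S ∘L P.ker.subtypeL) fun z ↦ hS z z.2
  refine ⟨B.coprod (P.ker.subtypeL ∘L L), fun x ↦ ?_⟩
  have hker : x - P x ∈ P.ker := by simp [hP]
  have hLS : L (S (x - P x)) = ⟨x - P x, hker⟩ := hL ⟨x - P x, hker⟩
  change B (A x) + (L (S (x - P x)) : E) = x
  rw [hLS, ← ContinuousLinearMap.comp_apply, hBA, add_sub_cancel]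

end Splitting

section Ratio

open Xpw

variable [Fact (1 ≤ ENNReal.ofReal p)] {x : Xpw p w} {α : ℝ}

theorem nrm2_le_of_ratio_le (h : x ≠ 0 → ratio x ≤ α) : nrm2 x ≤ α * nrmP x := by
  rcases eq_or_ne x 0 with rfl | hx
  · simp [← norm_toSeq2, ← norm_toSeqP]
  have : 0 < nrmP x := norm_pos_iff.2 ((map_ne_zero_iff toSeqP toSeqP_injective).2 hx)
  exact (div_le_iff₀ this).1 (h hx)

theorem norm_le_of_le_ratio (hα : 0 < α) (h : α ≤ ratio x) : ‖x‖ ≤ max 1 α⁻¹ * nrm2 x := by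
  have h2 : 0 ≤ nrm2 x := norm_nonneg _
  have hP : nrmP x ≤ α⁻¹ * nrm2 x := by
    rw [inv_mul_eq_div, le_div_iff₀ hα, mul_comm]
    exact mul_le_of_le_div₀ h2 (norm_nonneg _) h
  rw [norm_eq_max]
  exact max_le (hP.trans (by gcongr; exact le_max_right _ _))
    (le_mul_of_one_le_left h2 (le_max_left _ _))

end Ratio

theorem stmt16_general (p : ℝ) (hp : 2 < p) [Fact (1 ≤ ENNReal.ofReal p)]
    (w : ℕ → ℝ) (hw : ∀ n, 0 < w n)
    (X : Submodule ℝ (Xpw p w)) (hX : X.ClosedComplemented)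
    (P : ↥X →L[ℝ] ↥X) (hP : ∀ x : ↥X, P (P x) = P x)
    (Y : Submodule ℝ ↥X) (hY : Y = LinearMap.range (P : ↥X →ₗ[ℝ] ↥X))
    (ε α α' : ℝ) (hα : 0 < α)
    (hεP : ε * ‖ContinuousLinearMap.id ℝ ↥X - P‖ ≤ 1)
    (ha : ∀ y : ↥X, y ∈ Y → y ≠ 0 → ratio (y : Xpw p w) ≤ α')
    (hb : ∀ x : ↥X, x ≠ 0 → ratio (x : Xpw p w) < α → ∃ y ∈ Y, ‖x - y‖ < ε * ‖x‖) :
    ∃ V : Submodule ℝ (SeqP p × Seq2), V.ClosedComplemented ∧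
      Nonempty (↥X ≃L[ℝ] ↥V) := by
  have : CompleteSpace X := hX.isClosed.completeSpace_coe
  obtain ⟨Q, hQ⟩ := hX
  have hdom (x : X) : nrm2 (P x : Xpw p w) ≤ α' * nrmP (P x : Xpw p w) :=
    nrm2_le_of_ratio_le fun hx ↦ ha _ (hY ▸ ⟨x, rfl⟩) (by simpa using hx)
  obtain ⟨A, B, hBA⟩ := exists_comp_eq_of_nrm2_le hp hw (X.subtypeL ∘L P) hdom
  have hker (z : X) (hz : P z = 0) : ‖z‖ ≤ max 1 α⁻¹ * ‖(Xpw.toSeq2 ∘L X.subtypeL) z‖ := by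
    rcases eq_or_ne z 0 with h | h
    · simp [h]
    · refine norm_le_of_le_ratio hα (not_lt.1 fun hlt ↦ ?_)
      obtain ⟨y, hy, hyz⟩ := hb z h hlt
      obtain ⟨x, rfl⟩ := hY ▸ hy
      exact hyz.not_ge (mul_norm_le_norm_sub_apply hP hεP hz x)
  have hA : (Q ∘L B) ∘L A = P := by
    rw [ContinuousLinearMap.comp_assoc, hBA]
    exact ContinuousLinearMap.ext fun x ↦ hQ (P x)
  have hinv := hasLeftInverse_prod_of_comp_eq hP hA hker
  exact ⟨_, hinv.closedComplemented_range,
    ⟨ContinuousLinearMap.equivRange hinv.injective hinv.isClosed_range⟩⟩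

/-- Proposition 2.6, direct implication: let `X` be a complemented
subspace of `X_p`, `P` a bounded projection on `X` with range `Y`, and `ε, α, α' > 0`
with `ε ≤ ‖I - P‖⁻¹` (stated multiplicatively as `ε ‖I - P‖ ≤ 1`) such that
(a) `r(y) ≤ α'` for all nonzero `y ∈ Y` and (b) every nonzero `x ∈ X` with `r(x) < α`
admits `y ∈ Y` with `‖x - y‖ < ε ‖x‖`.  Then `X` is isomorphic to a complemented
subspace of `ℓ_p ⊕ ℓ_2`. -/
theorem stmt16 (p : ℝ) (hp : 2 < p) [Fact (1 ≤ ENNReal.ofReal p)]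
    (w : ℕ → ℝ) (hw : IsXpWeight p w)
    (X : Submodule ℝ (Xpw p w)) (hX : X.ClosedComplemented)
    (P : ↥X →L[ℝ] ↥X) (hP : ∀ x : ↥X, P (P x) = P x)
    (Y : Submodule ℝ ↥X) (hY : Y = LinearMap.range (P : ↥X →ₗ[ℝ] ↥X))
    (ε α α' : ℝ) (hε0 : 0 < ε) (hα : 0 < α) (hα' : 0 < α')
    (hεP : ε * ‖ContinuousLinearMap.id ℝ ↥X - P‖ ≤ 1)
    (ha : ∀ y : ↥X, y ∈ Y → y ≠ 0 → ratio (y : Xpw p w) ≤ α')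
    (hb : ∀ x : ↥X, x ≠ 0 → ratio (x : Xpw p w) < α → ∃ y ∈ Y, ‖x - y‖ < ε * ‖x‖) :
    ∃ V : Submodule ℝ (SeqP p × Seq2), V.ClosedComplemented ∧
      Nonempty (↥X ≃L[ℝ] ↥V) :=
  stmt16_general p hp w hw.1 X hX P hP Y hY ε α α' hα hεP ha hb
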